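/- (Proposition: parabolic comparison principle on a goal interval.) Let a < b be real numbers. Let u : [a,b] × 𝒮̄ → ℝ be upper semicontinuous and a viscosity subsolution of max{𝓛[V], V − M[V]} = 0 on [a,b) × 𝒮, and let v : [a,b] × 𝒮̄ → ℝ be lower semicontinuous and a viscosity supersolution of max{𝓛[V], V − M[V]} = 0 on [a,b) × 𝒮. Assume: 0 ≤ u(t,x) ≤ W and −c(1 + |x|^{p₀}) ≤ v(t,x) ≤ W for all (t,x) ∈ [a,b] × 𝒮̄, where W := Σ_{i=k}^K w_i G_i; u(t,(0,0)) ≤ v(t,(0,0)) = W for all t ∈ [a,b]; and u(b,x) ≤ v(b,x) for all x ∈ 𝒮̄. Then u(t,x) ≤ v(t,x) for all (t,x) ∈ [a,b] × 𝒮̄. -/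

import Mathlib

open Set Filter

/-- The closed positive quadrant of portfolio positions. -/
def Sbar : Set (ℝ × ℝ) := Set.Ici 0 ×ˢ Set.Ici 0

/-- The positive quadrant without the origin. -/
def Sset : Set (ℝ × ℝ) := Sbar \ {(0, 0)}

/-- A transaction cost function. -/
def IsCostFn (C : ℝ → ℝ) : Prop :=
  Continuous C ∧ (∀ d₁ d₂ : ℝ, |d₁| ≤ |d₂| → C d₁ ≤ C d₂) ∧ 0 < C 0 ∧
    StrictMono (fun d => d + C d) ∧ Set.Ici (0 : ℝ) ⊆ Set.range (fun d => d + C d)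

/-- The rebalancing map. -/
def Gam (C : ℝ → ℝ) (x : ℝ × ℝ) (d : ℝ) : ℝ × ℝ := (x.1 - d - C d, x.2 + d)

/-- The set of feasible transactions. -/
def Dset (C : ℝ → ℝ) (x : ℝ × ℝ) : Set ℝ := {d | Gam C x d ∈ Sbar}

/-- Intervention operator applied to a time-dependent function
`f : ℝ → ℝ × ℝ → ℝ`, with value `+∞` if no transaction is feasible. -/
noncomputable def MopF (C : ℝ → ℝ) (f : ℝ → ℝ × ℝ → ℝ) (p : ℝ × (ℝ × ℝ)) : EReal :=
  ⨅ d ∈ Dset C p.2, ((f p.1 (Gam C p.2 d) : ℝ) : EReal)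

/-- Upper semicontinuous envelope of `h` computed on `E`. -/
noncomputable def uscEnv {α : Type*} [TopologicalSpace α]
    (h : α → EReal) (E : Set α) (z : α) : EReal :=
  Filter.limsup h (nhdsWithin z E)

/-- Lower semicontinuous envelope of `h` computed on `E`. -/
noncomputable def lscEnv {α : Type*} [TopologicalSpace α]
    (h : α → EReal) (E : Set α) (z : α) : EReal :=
  Filter.liminf h (nhdsWithin z E)

/-- Euclidean norm on `ℝ²`. -/
noncomputable def eunorm (p : ℝ × ℝ) : ℝ := Real.sqrt (p.1 ^ 2 + p.2 ^ 2)

/-- The operator `𝓛[φ](t, x₀, x₁)` of the portfolio dynamics, written in terms of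
classical partial derivatives of the (curried) test function `φ`. -/
noncomputable def gen (r μ σ : ℝ) (φ : ℝ → ℝ → ℝ → ℝ) (t x₀ x₁ : ℝ) : ℝ :=
  -(deriv (fun s => φ s x₀ x₁) t)
    - r * x₀ * deriv (fun y => φ t y x₁) x₀
    - μ * x₁ * deriv (fun y => φ t x₀ y) x₁
    - σ ^ 2 / 2 * x₁ ^ 2 * deriv (deriv (fun y => φ t x₀ y)) x₁

/-- The parabolic interior domain `[a, b) × 𝒮` as a subset of `ℝ × ℝ × ℝ`. -/
def domI (a b : ℝ) : Set (ℝ × ℝ × ℝ) :=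
  {p | a ≤ p.1 ∧ p.1 < b ∧ (p.2.1, p.2.2) ∈ Sset}

/-- A test function is `C²` on an open neighbourhood of `[a, b) × 𝒮`. -/
def IsTest (a b : ℝ) (φ : ℝ → ℝ → ℝ → ℝ) : Prop :=
  ∃ U : Set (ℝ × ℝ × ℝ), IsOpen U ∧ domI a b ⊆ U ∧
    ContDiffOn ℝ 2 (fun p : ℝ × ℝ × ℝ => φ p.1 p.2.1 p.2.2) U

/-- Viscosity subsolution of `max{𝓛[V], V − M[V]} = 0` on `[a, b) × 𝒮`
(for an upper semicontinuous function on `[a, b] × 𝒮̄`; envelopes are computed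
on `[a, b] × 𝒮̄`). -/
def IsViscSubsol (C : ℝ → ℝ) (r μ σ a b : ℝ) (u : ℝ → ℝ × ℝ → ℝ) : Prop :=
  ∀ tb : ℝ, ∀ xb : ℝ × ℝ, tb ∈ Set.Ico a b → xb ∈ Sset →
    ∀ φ : ℝ → ℝ → ℝ → ℝ, IsTest a b φ →
      (∀ t ∈ Set.Ico a b, ∀ x ∈ Sset,
        u t x - φ t x.1 x.2 ≤ u tb xb - φ tb xb.1 xb.2) →
      gen r μ σ φ tb xb.1 xb.2 ≤ 0 ∧
      (u tb xb : EReal) ≤ uscEnv (MopF C u) (Set.Icc a b ×ˢ Sbar) (tb, xb)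

/-- Viscosity supersolution of `max{𝓛[V], V − M[V]} = 0` on `[a, b) × 𝒮`. -/
def IsViscSupersol (C : ℝ → ℝ) (r μ σ a b : ℝ) (v : ℝ → ℝ × ℝ → ℝ) : Prop :=
  ∀ tb : ℝ, ∀ xb : ℝ × ℝ, tb ∈ Set.Ico a b → xb ∈ Sset →
    ∀ φ : ℝ → ℝ → ℝ → ℝ, IsTest a b φ →
      (∀ t ∈ Set.Ico a b, ∀ x ∈ Sset,
        v tb xb - φ tb xb.1 xb.2 ≤ v t x - φ t x.1 x.2) →
      0 ≤ gen r μ σ φ tb xb.1 xb.2 ∨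
      lscEnv (MopF C v) (Set.Icc a b ×ˢ Sbar) (tb, xb) ≤ (v tb xb : EReal)

/-! At a maximum of `u - v - ε ψ` the positive transaction cost strictly lowers `ψ`, so that no
impulse is optimal for `v` there. Near that point `w = v + ε ψ + const` is therefore a strict
supersolution of `𝓛[w] = 0`, and the subsolution `u` touches it from below. Doubling of variables
is avoided because, along the characteristics `x₀ = const * e ^ (r t)`, `𝓛` is a one-dimensional
heat operator in the log-price. On the time slice `t₀ + τ` one can insert a cosine polynomial
between `u` and `w` up to an arbitrarily small error, and its heat flow `g` solves `𝓛[g] = 0`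
before that time. Comparing `u` and `w` with `g` by means of barriers that are `O(τ ^ 2)` at the
touching point forces `ε τ = O(τ ^ 2)`, a contradiction as `τ → 0`. -/

open scoped Topology

section Generator

/-- `φ` is `C²` at `z` and `l` is the value there of `𝓛[φ]`, i.e. of `gen` applied to the curried
form of `φ`. -/
def HasGenAt (r μ σ : ℝ) (φ : ℝ × ℝ × ℝ → ℝ) (z : ℝ × ℝ × ℝ) (l : ℝ) : Prop :=
  ContDiffAt ℝ 2 φ z ∧ gen r μ σ (fun t x y => φ (t, x, y)) z.1 z.2.1 z.2.2 = l

variable {r μ σ : ℝ} {φ ψ : ℝ × ℝ × ℝ → ℝ} {z : ℝ × ℝ × ℝ} {l m : ℝ}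

theorem HasGenAt.of_contDiffAt (hφ : ContDiffAt ℝ 2 φ z) :
    HasGenAt r μ σ φ z (gen r μ σ (fun t x y => φ (t, x, y)) z.1 z.2.1 z.2.2) :=
  ⟨hφ, rfl⟩

theorem HasGenAt.of_hasDerivAt {A B E : ℝ} {D : ℝ → ℝ} (hφ : ContDiffAt ℝ 2 φ z)
    (ht : HasDerivAt (fun t => φ (t, z.2)) A z.1)
    (hx : HasDerivAt (fun x => φ (z.1, x, z.2.2)) B z.2.1)
    (hy : ∀ᶠ y in 𝓝 z.2.2, HasDerivAt (fun y => φ (z.1, z.2.1, y)) (D y) y)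
    (hyy : HasDerivAt D E z.2.2)
    (hl : -A - r * z.2.1 * B - μ * z.2.2 * D z.2.2 - σ ^ 2 / 2 * z.2.2 ^ 2 * E = l) :
    HasGenAt r μ σ φ z l := by
  have hD : deriv (fun y => φ (z.1, z.2.1, y)) =ᶠ[𝓝 z.2.2] D := hy.mono fun y h => h.deriv
  exact ⟨hφ, by rw [gen, ht.deriv, hx.deriv, hD.eq_of_nhds, hD.deriv_eq, hyy.deriv, hl]⟩

theorem contDiffAt_slices (hφ : ContDiffAt ℝ 2 φ z) :
    ContDiffAt ℝ 2 (fun t => φ (t, z.2.1, z.2.2)) z.1 ∧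
      ContDiffAt ℝ 2 (fun x => φ (z.1, x, z.2.2)) z.2.1 ∧
      ContDiffAt ℝ 2 (fun y => φ (z.1, z.2.1, y)) z.2.2 :=
  ⟨hφ.comp (f := fun t => (t, z.2.1, z.2.2)) z.1 (by fun_prop),
    hφ.comp (f := fun x => (z.1, x, z.2.2)) z.2.1 (by fun_prop),
    hφ.comp (f := fun y => (z.1, z.2.1, y)) z.2.2 (by fun_prop)⟩

theorem HasGenAt.add (hφ : HasGenAt r μ σ φ z l) (hψ : HasGenAt r μ σ ψ z m) :
    HasGenAt r μ σ (fun p => φ p + ψ p) z (l + m) := by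
  obtain ⟨hφ, rfl⟩ := hφ
  obtain ⟨hψ, rfl⟩ := hψ
  obtain ⟨hφt, hφx, hφy⟩ := contDiffAt_slices hφ
  obtain ⟨hψt, hψx, hψy⟩ := contDiffAt_slices hψ
  have hyy := iteratedDeriv_fun_add hφy hψy
  simp only [iteratedDeriv_succ, iteratedDeriv_zero] at hyy
  refine ⟨hφ.add hψ, ?_⟩
  rw [gen, hyy, deriv_fun_add (hφt.differentiableAt two_ne_zero) (hψt.differentiableAt two_ne_zero),
    deriv_fun_add (hφx.differentiableAt two_ne_zero) (hψx.differentiableAt two_ne_zero),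
    deriv_fun_add (hφy.differentiableAt two_ne_zero) (hψy.differentiableAt two_ne_zero), gen, gen]
  ring

theorem HasGenAt.const_mul (c : ℝ) (hφ : HasGenAt r μ σ φ z l) :
    HasGenAt r μ σ (fun p => c * φ p) z (c * l) := by
  obtain ⟨hφ, rfl⟩ := hφ
  refine ⟨contDiffAt_const.mul hφ, ?_⟩
  simp only [gen, deriv_const_mul_field']
  ring

theorem HasGenAt.neg (hφ : HasGenAt r μ σ φ z l) : HasGenAt r μ σ (fun p => -φ p) z (-l) := by
  simpa only [neg_one_mul] using hφ.const_mul (-1)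

theorem HasGenAt.sub (hφ : HasGenAt r μ σ φ z l) (hψ : HasGenAt r μ σ ψ z m) :
    HasGenAt r μ σ (fun p => φ p - ψ p) z (l - m) := by
  simpa only [sub_eq_add_neg] using hφ.add hψ.neg

theorem HasGenAt.congr_of_eventuallyEq (hφ : HasGenAt r μ σ φ z l) (h : ψ =ᶠ[𝓝 z] φ) :
    HasGenAt r μ σ ψ z l := by
  obtain ⟨hφ, rfl⟩ := hφ
  have ht : (fun t => ψ (t, z.2.1, z.2.2)) =ᶠ[𝓝 z.1] fun t => φ (t, z.2.1, z.2.2) :=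
    (Continuous.tendsto (f := fun t => (t, z.2.1, z.2.2)) (by fun_prop) z.1).eventually h
  have hx : (fun x => ψ (z.1, x, z.2.2)) =ᶠ[𝓝 z.2.1] fun x => φ (z.1, x, z.2.2) :=
    (Continuous.tendsto (f := fun x => (z.1, x, z.2.2)) (by fun_prop) z.2.1).eventually h
  have hy : (fun y => ψ (z.1, z.2.1, y)) =ᶠ[𝓝 z.2.2] fun y => φ (z.1, z.2.1, y) :=
    (Continuous.tendsto (f := fun y => (z.1, z.2.1, y)) (by fun_prop) z.2.2).eventually h
  exact ⟨hφ.congr_of_eventuallyEq h, by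
    rw [gen, ht.deriv_eq, hx.deriv_eq, hy.deriv_eq, hy.deriv.deriv_eq, gen]⟩

theorem HasGenAt.of_time {f : ℝ → ℝ} {f' : ℝ} (hf : ContDiff ℝ 2 f) (hf' : HasDerivAt f f' z.1) :
    HasGenAt r μ σ (fun p => f p.1) z (-f') :=
  .of_hasDerivAt (by fun_prop) hf' (hasDerivAt_const z.2.1 (f z.1))
    (Eventually.of_forall fun y => hasDerivAt_const y (f z.1)) (hasDerivAt_const _ 0) (by ring)

theorem hasGenAt_const (c : ℝ) : HasGenAt r μ σ (fun _ => c) z 0 := by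
  simpa only [neg_zero] using
    HasGenAt.of_time (f := fun _ => c) contDiff_const (hasDerivAt_const z.1 c)

theorem hasGenAt_comp_discounted_cash {g : ℝ → ℝ} (hg : ContDiff ℝ 2 g) :
    HasGenAt r μ σ (fun p => g (p.2.1 * Real.exp (-(r * p.1)))) z 0 := by
  have hg' (a : ℝ) := (hg.differentiable two_ne_zero a).hasDerivAt
  have ht := (((hasDerivAt_id z.1).const_mul r).fun_neg.exp).const_mul z.2.1
  have hx := (hasDerivAt_id z.2.1).mul_const (Real.exp (-(r * z.1)))
  refine .of_hasDerivAt (by fun_prop) ((hg' _).comp z.1 ht) ((hg' _).comp z.2.1 hx)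
    (Eventually.of_forall fun y => hasDerivAt_const y (g (z.2.1 * Real.exp (-(r * z.1)))))
    (hasDerivAt_const _ 0) ?_
  simp only [id]
  ring

theorem hasGenAt_discounted_stock_sq :
    HasGenAt r μ σ (fun p => p.2.2 ^ 2 * Real.exp (-((2 * μ + σ ^ 2) * p.1))) z 0 := by
  have ht := (((hasDerivAt_id z.1).const_mul (2 * μ + σ ^ 2)).fun_neg.exp).const_mul (z.2.2 ^ 2)
  have hy (y : ℝ) := (hasDerivAt_pow 2 y).mul_const (Real.exp (-((2 * μ + σ ^ 2) * z.1)))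
  have hyy := (((hasDerivAt_pow 1 z.2.2).const_mul ((2 : ℕ) : ℝ))).mul_const
    (Real.exp (-((2 * μ + σ ^ 2) * z.1)))
  refine .of_hasDerivAt (by fun_prop) ht
    (hasDerivAt_const z.2.1 (z.2.2 ^ 2 * Real.exp (-((2 * μ + σ ^ 2) * z.1))))
    (Eventually.of_forall hy) hyy ?_
  simp only [id]
  norm_num
  ring

end Generator

section HeatEquation

open MeasureTheory ProbabilityTheory

/-- Classical solutions `F (s, y)` of the heat equation `∂F/∂s = (1/2) ∂²F/∂y²`. -/
def IsCaloric (F : ℝ × ℝ → ℝ) : Prop :=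
  ContDiff ℝ 2 F ∧
    ∀ s y, deriv (fun s => F (s, y)) s = deriv (deriv fun y => F (s, y)) y / 2

theorem IsCaloric.of_hasDerivAt {F A B E : ℝ × ℝ → ℝ} (hF : ContDiff ℝ 2 F)
    (hs : ∀ s y, HasDerivAt (fun s => F (s, y)) (A (s, y)) s)
    (hy : ∀ s y, HasDerivAt (fun y => F (s, y)) (B (s, y)) y)
    (hyy : ∀ s y, HasDerivAt (fun y => B (s, y)) (E (s, y)) y)
    (hAE : ∀ p, A p = E p / 2) : IsCaloric F := by
  refine ⟨hF, fun s y => ?_⟩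
  rw [(hs s y).deriv, funext fun y => (hy s y).deriv, (hyy s y).deriv, hAE]

theorem hasDerivAt_comp_prodMk {F : ℝ × ℝ → ℝ} (hF : Differentiable ℝ F) {f g : ℝ → ℝ}
    {f' g' t : ℝ} (hf : HasDerivAt f f' t) (hg : HasDerivAt g g' t) :
    HasDerivAt (fun t => F (f t, g t))
      (f' * deriv (fun s => F (s, g t)) (f t) + g' * deriv (fun y => F (f t, y)) (g t)) t := by
  have hFp := (hF (f t, g t)).hasFDerivAt
  have h₁ : HasDerivAt (fun s => F (s, g t)) (fderiv ℝ F (f t, g t) (1, 0)) (f t) :=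
    hFp.comp_hasDerivAt (f := fun s => (s, g t)) _
      ((hasDerivAt_id _).prodMk (hasDerivAt_const _ _))
  have h₂ : HasDerivAt (fun y => F (f t, y)) (fderiv ℝ F (f t, g t) (0, 1)) (g t) :=
    hFp.comp_hasDerivAt (f := fun y => (f t, y)) _
      ((hasDerivAt_const _ _).prodMk (hasDerivAt_id _))
  have h := hFp.comp_hasDerivAt t (hf.prodMk hg)
  rwa [show (f', g') = f' • ((1 : ℝ), (0 : ℝ)) + g' • ((0 : ℝ), (1 : ℝ)) by simp, map_add,
    map_smul, map_smul, ← h₁.deriv, ← h₂.deriv] at h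

/-- The logarithmic price coordinate with origin `L`, along which `𝓛` becomes a heat operator
running backwards from time `T`. -/
noncomputable def logCoord (μ σ T L : ℝ) (z : ℝ × ℝ × ℝ) : ℝ :=
  Real.log z.2.2 - L + (μ - σ ^ 2 / 2) * (T - z.1)

theorem hasDerivAt_logCoord (μ σ T L t x : ℝ) {y : ℝ} (hy : y ≠ 0) :
    HasDerivAt (fun y => logCoord μ σ T L (t, x, y)) y⁻¹ y :=
  ((Real.hasDerivAt_log hy).sub_const L).add_const ((μ - σ ^ 2 / 2) * (T - t))

theorem contDiffAt_logCoord (μ σ T L : ℝ) {z : ℝ × ℝ × ℝ} (hz : z.2.2 ≠ 0) :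
    ContDiffAt ℝ 2 (logCoord μ σ T L) z := by
  have hlog : ContDiffAt ℝ 2 (fun p : ℝ × ℝ × ℝ => Real.log p.2.2) z :=
    ContDiffAt.log (by fun_prop) hz
  exact (hlog.sub contDiffAt_const).add (by fun_prop)

theorem IsCaloric.hasGenAt_comp_logCoord {F : ℝ × ℝ → ℝ} (hF : IsCaloric F) (r μ σ T L : ℝ)
    {z : ℝ × ℝ × ℝ} (hz : z.2.2 ≠ 0) :
    HasGenAt r μ σ (fun p => F (σ ^ 2 * (T - p.1), logCoord μ σ T L p)) z 0 := by
  have hFd := hF.1.differentiable two_ne_zero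
  let S := σ ^ 2 * (T - z.1)
  let Y := logCoord μ σ T L z
  let F' : ℝ → ℝ := deriv fun y => F (S, y)
  have ht : HasDerivAt (fun t => F (σ ^ 2 * (T - t), logCoord μ σ T L (t, z.2)))
      (σ ^ 2 * -1 * deriv (fun s => F (s, Y)) S + (μ - σ ^ 2 / 2) * -1 * F' Y) z.1 :=
    have hT := (hasDerivAt_id' z.1).const_sub T
    hasDerivAt_comp_prodMk hFd (hT.const_mul (σ ^ 2))
      ((hT.const_mul (μ - σ ^ 2 / 2)).const_add (Real.log z.2.2 - L))
  have hy : ∀ᶠ y in 𝓝 z.2.2,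
      HasDerivAt (fun y => F (S, logCoord μ σ T L (z.1, z.2.1, y)))
        (F' (logCoord μ σ T L (z.1, z.2.1, y)) * y⁻¹) y := by
    filter_upwards [isOpen_ne.mem_nhds hz] with y hy
    exact ((hFd.comp (by fun_prop : Differentiable ℝ fun y : ℝ => (S, y))).differentiableAt
      |>.hasDerivAt).comp y
      (hasDerivAt_logCoord μ σ T L z.1 z.2.1 hy)
  have hF' : Differentiable ℝ F' := by
    have h : ContDiff ℝ (1 + 1) fun y => F (S, y) :=
      hF.1.comp (by fun_prop : ContDiff ℝ 2 fun y : ℝ => (S, y))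
    exact (contDiff_succ_iff_deriv.1 h).2.2.differentiable one_ne_zero
  have hyy : HasDerivAt (fun y => F' (logCoord μ σ T L (z.1, z.2.1, y)) * y⁻¹)
      (deriv F' Y * z.2.2⁻¹ * z.2.2⁻¹ + F' Y * -(z.2.2 ^ 2)⁻¹) z.2.2 :=
    ((hF' _).hasDerivAt.comp z.2.2 (hasDerivAt_logCoord μ σ T L z.1 z.2.1 hz)).mul
      (hasDerivAt_inv hz)
  refine .of_hasDerivAt
    (hF.1.contDiffAt.comp z (.prodMk (by fun_prop) (contDiffAt_logCoord μ σ T L hz))) ht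
    (hasDerivAt_const z.2.1 (F (S, Y))) hy hyy ?_
  rw [hF.2 S Y]
  change -(σ ^ 2 * -1 * (deriv F' Y / 2) + (μ - σ ^ 2 / 2) * -1 * F' Y) - r * z.2.1 * 0 -
    μ * z.2.2 * (F' Y * z.2.2⁻¹) -
    σ ^ 2 / 2 * z.2.2 ^ 2 * (deriv F' Y * z.2.2⁻¹ * z.2.2⁻¹ + F' Y * -(z.2.2 ^ 2)⁻¹) = 0
  field_simp
  ring

/-- The heat flow `∑ₖ cₖ e^{-k²s/2} cos (kθ)` of the cosine polynomial with coefficients `c`. -/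
noncomputable def cosHeat (c : ℕ →₀ ℝ) (p : ℝ × ℝ) : ℝ :=
  c.sum fun k a => a * (Real.exp (-(k ^ 2 * p.1 / 2)) * Real.cos (k * p.2))

theorem isCaloric_cosHeat (c : ℕ →₀ ℝ) : IsCaloric (cosHeat c) := by
  unfold cosHeat Finsupp.sum
  have hexp (k : ℕ) (s : ℝ) :=
    (((hasDerivAt_id' s).const_mul ((k : ℝ) ^ 2)).div_const 2).fun_neg.exp
  have hlin (k : ℕ) (y : ℝ) := (hasDerivAt_id' y).const_mul (k : ℝ)
  refine .of_hasDerivAt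
    (A := fun p => ∑ k ∈ c.support,
      c k * (Real.exp (-(k ^ 2 * p.1 / 2)) * -(k ^ 2 * 1 / 2) * Real.cos (k * p.2)))
    (B := fun p => ∑ k ∈ c.support,
      c k * (Real.exp (-(k ^ 2 * p.1 / 2)) * (-Real.sin (k * p.2) * (k * 1))))
    (E := fun p => ∑ k ∈ c.support,
      c k * (Real.exp (-(k ^ 2 * p.1 / 2)) * (-(Real.cos (k * p.2) * (k * 1)) * (k * 1))))
    (by fun_prop)
    (fun s y => .fun_sum fun k _ => ((hexp k s).mul_const (Real.cos (k * y))).const_mul _)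
    (fun s y => .fun_sum fun k _ =>
      ((hlin k y).cos.const_mul (Real.exp (-(k ^ 2 * s / 2)))).const_mul _)
    (fun s y => .fun_sum fun k _ => (((hlin k y).sin.fun_neg.mul_const (k * 1 : ℝ)).const_mul
      (Real.exp (-(k ^ 2 * s / 2)))).const_mul _) fun p => ?_
  rw [Finset.sum_div]
  exact Finset.sum_congr rfl fun k _ => by ring

theorem integral_cos_add_gaussianReal (s : NNReal) (k α : ℝ) :
    ∫ x, Real.cos (α + k * x) ∂gaussianReal 0 s = Real.exp (-(k ^ 2 * s / 2)) * Real.cos α := by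
  have hint : Integrable (fun x : ℝ => Complex.exp (k * x * Complex.I)) (gaussianReal 0 s) := by
    refine (integrable_const (1 : ℝ)).mono' (by fun_prop) (Eventually.of_forall fun x => ?_)
    rw [← Complex.ofReal_mul, Complex.norm_exp_ofReal_mul_I]
  have hchar : ∫ x : ℝ, Complex.exp (k * x * Complex.I) ∂gaussianReal 0 s =
      (Real.exp (-(k ^ 2 * s / 2)) : ℝ) := by
    rw [← charFun_apply_real, charFun_gaussianReal]
    push_cast
    ring_nf
  calc ∫ x, Real.cos (α + k * x) ∂gaussianReal 0 s
      = ∫ x : ℝ, RCLike.re (Complex.exp (α * Complex.I) * Complex.exp (k * x * Complex.I))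
          ∂gaussianReal 0 s := integral_congr_ae <| Eventually.of_forall fun x => by
        dsimp only
        rw [← Complex.exp_add, ← add_mul, ← Complex.ofReal_mul, ← Complex.ofReal_add,
          RCLike.re_eq_complex_re, Complex.exp_ofReal_mul_I_re]
    _ = Real.exp (-(k ^ 2 * s / 2)) * Real.cos α := by
        rw [integral_re (hint.const_mul _), integral_const_mul, hchar, RCLike.re_eq_complex_re,
          Complex.re_mul_ofReal, Complex.exp_ofReal_mul_I_re, mul_comm]

theorem cosHeat_eq_integral (c : ℕ →₀ ℝ) (s : NNReal) (θ : ℝ) :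
    cosHeat c (s, θ) = ∫ x, cosHeat c (0, θ + x) ∂gaussianReal 0 s := by
  have hint (k : ℕ) :
      Integrable (fun x => c k * Real.cos (k * θ + k * x)) (gaussianReal 0 s) :=
    ((integrable_const (1 : ℝ)).mono' (by fun_prop)
      (Eventually.of_forall fun x => Real.abs_cos_le_one _)).const_mul _
  simp only [cosHeat, Finsupp.sum, mul_zero, zero_div, neg_zero, Real.exp_zero, one_mul, mul_add]
  rw [integral_finsetSum _ fun k _ => hint k]
  exact Finset.sum_congr rfl fun k _ => by
    rw [integral_const_mul, integral_cos_add_gaussianReal]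

theorem cosHeat_mem_Icc {c : ℕ →₀ ℝ} {m M : ℝ} (h : ∀ θ, cosHeat c (0, θ) ∈ Icc m M) {s : ℝ}
    (hs : 0 ≤ s) (θ : ℝ) : cosHeat c (s, θ) ∈ Icc m M := by
  lift s to NNReal using hs
  have hcont : Continuous fun x => cosHeat c (0, θ + x) :=
    (isCaloric_cosHeat c).1.continuous.comp (by fun_prop)
  rw [cosHeat_eq_integral]
  exact (convex_Icc m M).integral_mem isClosed_Icc (Eventually.of_forall fun x => h (θ + x))
    ((integrable_const (max |m| |M|)).mono' hcont.aestronglyMeasurable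
      (Eventually.of_forall fun x => abs_le_max_abs_abs (h (θ + x)).1 (h (θ + x)).2))

theorem exists_cosHeat_zero_eq_eval_cos (p : Polynomial ℝ) :
    ∃ c, ∀ θ, cosHeat c (0, θ) = p.eval (Real.cos θ) := by
  have hspan := (Polynomial.Chebyshev.chebyshevTsequence ℝ).span fun k => by simp
  obtain ⟨c, rfl⟩ :=
    Finsupp.mem_span_range_iff_exists_finsupp.1 (hspan.ge (Submodule.mem_top (x := p)))
  refine ⟨c, fun θ => ?_⟩
  simp only [cosHeat, Finsupp.sum, Polynomial.eval_finsetSum, Polynomial.eval_smul, smul_eq_mul,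
    mul_zero, zero_div, neg_zero, Real.exp_zero, one_mul]
  exact Finset.sum_congr rfl fun k _ =>
    congrArg (c k * ·) (Polynomial.Chebyshev.T_real_cos θ k).symm

theorem exists_cosHeat_between {J : Set ℝ} (hJ : IsClosed J) (hJπ : J ⊆ Icc 0 Real.pi)
    {U V : ℝ → ℝ} (hU : UpperSemicontinuousOn U J) (hV : LowerSemicontinuousOn V J)
    {m M η : ℝ} (hmM : m ≤ M) (hη : 0 < η) (hU_mem : ∀ y ∈ J, U y ∈ Icc m M)
    (hUV : ∀ y ∈ J, U y ≤ V y) :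
    ∃ c, (∀ y ∈ J, cosHeat c (0, y) ∈ Icc (U y - η) (V y + η)) ∧
      ∀ θ, cosHeat c (0, θ) ∈ Icc (m - η) (M + η) := by
  obtain ⟨g, hg⟩ := exists_continuous_forall_mem_convex_of_local_const (X := ℝ) (E := ℝ)
    (t := fun y => {x | x ∈ Icc m M ∧ (y ∈ J → x ∈ Ioo (U y - η / 2) (V y + η / 2))})
    (fun y => (convex_Icc m M).inter fun _ hx _ hx' _ _ hα hβ hαβ hy =>
      convex_Ioo (U y - η / 2) (V y + η / 2) (hx hy) (hx' hy) hα hβ hαβ)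
    (fun y => by
      by_cases hy : y ∈ J
      · have hU' := eventually_nhdsWithin_iff.1 (hU y hy (U y + η / 2) (by linarith))
        have hV' := eventually_nhdsWithin_iff.1 (hV y hy (U y - η / 2) (by linarith [hUV y hy]))
        refine ⟨U y, ?_⟩
        filter_upwards [hU', hV'] with y' hUy' hVy'
        exact ⟨hU_mem y hy, fun hy' => ⟨by linarith [hUy' hy'], by linarith [hVy' hy']⟩⟩
      · refine ⟨m, ?_⟩
        filter_upwards [hJ.isOpen_compl.mem_nhds hy] with y' hy'
        exact ⟨left_mem_Icc.2 hmM, fun h => absurd h hy'⟩)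
  obtain ⟨p, hp⟩ := exists_polynomial_near_of_continuousOn (-1) 1 (fun x => g (Real.arccos x))
    (g.continuous.comp Real.continuous_arccos).continuousOn (η / 2) (half_pos hη)
  obtain ⟨c, hc⟩ := exists_cosHeat_zero_eq_eval_cos p
  have hnear (θ : ℝ) := abs_lt.1 (hp (Real.cos θ) (Real.cos_mem_Icc θ))
  refine ⟨c, fun y hy => ?_, fun θ => ?_⟩
  · have hpy := hnear y
    rw [Real.arccos_cos (hJπ hy).1 (hJπ hy).2] at hpy
    have hgy := (hg y).2 hy
    rw [hc]
    constructor <;> linarith [hpy.1, hpy.2, hgy.1, hgy.2]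
  · have hgθ := (hg (Real.arccos (Real.cos θ))).1
    rw [hc]
    constructor <;> linarith [(hnear θ).1, (hnear θ).2, hgθ.1, hgθ.2]

/-- The heat polynomial with initial datum `y⁴`. -/
def quarticHeat (p : ℝ × ℝ) : ℝ := p.2 ^ 4 + 6 * p.1 * p.2 ^ 2 + 3 * p.1 ^ 2

theorem pow_four_le_quarticHeat {s : ℝ} (hs : 0 ≤ s) (y : ℝ) : y ^ 4 ≤ quarticHeat (s, y) := by
  have : 0 ≤ 6 * s * y ^ 2 + 3 * s ^ 2 := by positivity
  simp only [quarticHeat]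
  linarith

theorem quarticHeat_mul_le {s c τ : ℝ} (hs : 0 ≤ s) (hτ : 0 ≤ τ) (hτ1 : τ ≤ 1) :
    quarticHeat (s * τ, c * τ) ≤ quarticHeat (s, c) * τ ^ 2 := by
  have h₄ : τ ^ 4 ≤ τ ^ 2 := pow_le_pow_of_le_one hτ hτ1 (by norm_num)
  have h₃ : τ ^ 3 ≤ τ ^ 2 := pow_le_pow_of_le_one hτ hτ1 (by norm_num)
  calc quarticHeat (s * τ, c * τ) = c ^ 4 * τ ^ 4 + 6 * s * c ^ 2 * τ ^ 3 + 3 * s ^ 2 * τ ^ 2 := by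
        simp only [quarticHeat]; ring
    _ ≤ c ^ 4 * τ ^ 2 + 6 * s * c ^ 2 * τ ^ 2 + 3 * s ^ 2 * τ ^ 2 := by gcongr
    _ = quarticHeat (s, c) * τ ^ 2 := by simp only [quarticHeat]; ring

theorem isCaloric_quarticHeat : IsCaloric quarticHeat := by
  unfold quarticHeat
  refine .of_hasDerivAt (A := fun p => 6 * p.2 ^ 2 + 6 * p.1)
    (B := fun p => 4 * p.2 ^ 3 + 12 * p.1 * p.2) (E := fun p => 12 * p.2 ^ 2 + 12 * p.1)
    (by fun_prop) (fun s y => ?_) (fun s y => ?_) (fun s y => ?_) fun p => by ring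
  · refine HasDerivAt.congr_deriv ((((hasDerivAt_id' s).const_mul 6).mul_const (y ^ 2)).const_add
      (y ^ 4) |>.add ((hasDerivAt_pow 2 s).const_mul 3)) ?_
    norm_num
    ring
  · refine HasDerivAt.congr_deriv (((hasDerivAt_pow 4 y).add
      ((hasDerivAt_pow 2 y).const_mul (6 * s))).add_const (3 * s ^ 2)) ?_
    norm_num
    ring
  · refine HasDerivAt.congr_deriv (((hasDerivAt_pow 3 y).const_mul 4).add
      ((hasDerivAt_id' y).const_mul (12 * s))) ?_
    norm_num
    ring

end HeatEquation

section Penalization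

variable {X : Type*} [TopologicalSpace X] {K Kb : Set X} {f P : X → ℝ}

theorem exists_forall_lt_mul_of_isCompact (hK : IsCompact K) (hf : UpperSemicontinuousOn f K)
    (hP : LowerSemicontinuousOn P K) (hP0 : ∀ z ∈ K, 0 ≤ P z) (h : ∀ z ∈ K, P z = 0 → f z < 0) :
    ∃ N : ℝ, 0 ≤ N ∧ ∀ z ∈ K, f z < N * P z := by
  suffices ∃ N : ℝ, 0 ≤ N ∧ ∀ z ∈ K, z ∈ K → f z < N * P z from
    this.imp fun N hN => ⟨hN.1, fun z hz => hN.2 z hz hz⟩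
  refine hK.induction_on (p := fun s => ∃ N : ℝ, 0 ≤ N ∧ ∀ z ∈ s, z ∈ K → f z < N * P z)
    ⟨0, le_rfl, by simp⟩ ?_ ?_ fun x hx => ?_
  · rintro s t hst ⟨N, hN0, hN⟩
    exact ⟨N, hN0, fun z hz => hN z (hst hz)⟩
  · rintro s t ⟨N, hN0, hN⟩ ⟨N', -, hN'⟩
    refine ⟨max N N', le_max_of_le_left hN0, fun z hz hzK => hz.elim (fun hz => ?_) fun hz => ?_⟩
    · exact (hN z hz hzK).trans_le (mul_le_mul_of_nonneg_right (le_max_left _ _) (hP0 z hzK))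
    · exact (hN' z hz hzK).trans_le (mul_le_mul_of_nonneg_right (le_max_right _ _) (hP0 z hzK))
  · rcases (hP0 x hx).eq_or_lt with hPx | hPx
    · exact ⟨_, hf x hx 0 (h x hx hPx.symm), 0, le_rfl, fun z hz _ => by simpa using hz⟩
    · have hPev := hP x hx (P x / 2) (half_lt_self hPx)
      have hfev := hf x hx (|f x| + 1) (by linarith [le_abs_self (f x)])
      refine ⟨_, hPev.and hfev, (|f x| + 1) / (P x / 2), by positivity, fun z hz _ => ?_⟩
      calc f z < |f x| + 1 := hz.2
        _ = (|f x| + 1) / (P x / 2) * (P x / 2) := by field_simp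
        _ ≤ (|f x| + 1) / (P x / 2) * P z := by gcongr; exact hz.1.le

theorem nonpos_of_forall_isMaxOn_sub_mul (hK : IsCompact K) (hKb : IsCompact Kb) (hKbK : Kb ⊆ K)
    (hf : UpperSemicontinuousOn f K) (hP : LowerSemicontinuousOn P K) (hP0 : ∀ z ∈ K, 0 ≤ P z)
    (hneg : ∀ z ∈ Kb, P z = 0 → f z < 0)
    (hmax : ∀ N, 0 ≤ N → ∀ z ∈ K \ Kb, IsMaxOn (fun q => f q - N * P q) K z → f z ≤ 0) :
    ∀ z ∈ K, P z = 0 → f z ≤ 0 := by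
  intro z₁ hz₁ hPz₁
  obtain ⟨N, hN0, hN⟩ := exists_forall_lt_mul_of_isCompact hKb (hf.mono hKbK) (hP.mono hKbK)
    (fun z hz => hP0 z (hKbK hz)) hneg
  have hNP : UpperSemicontinuousOn (fun q => -(N * P q)) K :=
    (by fun_prop : Continuous fun x : ℝ => -(N * x)).comp_lowerSemicontinuousOn_antitone hP
      fun _ _ h => neg_le_neg (mul_le_mul_of_nonneg_left h hN0)
  obtain ⟨z, hz, hzmax⟩ := (hf.add hNP).exists_isMaxOn ⟨z₁, hz₁⟩ hK
  simp only [← sub_eq_add_neg] at hzmax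
  have hle : f z₁ ≤ f z - N * P z := by simpa [hPz₁] using hzmax hz₁
  by_cases hzb : z ∈ Kb
  · linarith [hN z hzb]
  · linarith [hmax N hN0 z ⟨hz, hzb⟩ hzmax, mul_nonneg hN0 (hP0 z hz)]

end Penalization

section TestFunctions

variable {E : Type*} [NormedAddCommGroup E] [NormedSpace ℝ E]

theorem exists_contDiff_isMaxOn_sub [HasContDiffBump E] {n : ℕ} {D : Set E} {f φ M : E → ℝ} {z : E}
    (hφ : ContDiffAt ℝ n φ z) (hM : ContDiff ℝ n M) (hfM : ∀ q ∈ D, f q ≤ M q)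
    (hmax : IsLocalMaxOn (fun q => f q - φ q) D z) :
    ∃ Φ : E → ℝ, ContDiff ℝ n Φ ∧ Φ =ᶠ[𝓝 z] φ ∧ IsMaxOn (fun q => f q - Φ q) D z := by
  obtain ⟨R, hR, hball⟩ := Metric.mem_nhds_iff.1
    ((hφ.eventually (by simp)).and (eventually_nhdsWithin_iff.1 hmax))
  let χ : ContDiffBump z := ⟨R / 3, R / 2, by positivity, by linarith⟩
  have hχ : ContDiff ℝ n χ := χ.contDiff
  let Φ : E → ℝ := fun q => χ q * φ q + (1 - χ q) * (M q - (f z - φ z))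
  have heq : Φ =ᶠ[𝓝 z] φ := by
    filter_upwards [χ.eventuallyEq_one] with q hq
    simp [Φ, hq]
  refine ⟨Φ, ?_, heq, fun q hq => ?_⟩
  · refine .add (contDiff_iff_contDiffAt.2 fun q => ?_)
      ((contDiff_const.sub hχ).mul (hM.sub contDiff_const))
    by_cases hq : q ∈ tsupport χ
    · rw [χ.tsupport_eq] at hq
      exact hχ.contDiffAt.mul (hball (Metric.closedBall_subset_ball (half_lt_self hR) hq)).1
    · refine (contDiffAt_const (c := (0 : ℝ))).congr_of_eventuallyEq ?_
      filter_upwards [notMem_tsupport_iff_eventuallyEq.1 hq] with q' hq'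
      simp [hq']
  · change f q - Φ q ≤ f z - Φ z
    rw [heq.eq_of_nhds]
    have hout : (1 - χ q) * (f q - (M q - (f z - φ z))) ≤ (1 - χ q) * (f z - φ z) :=
      mul_le_mul_of_nonneg_left (by linarith [hfM q hq]) (sub_nonneg.2 χ.le_one)
    have hin : χ q * (f q - φ q) ≤ χ q * (f z - φ z) := by
      by_cases hχq : q ∈ Function.support χ
      · rw [χ.support_eq] at hχq
        exact mul_le_mul_of_nonneg_left
          ((hball (Metric.ball_subset_ball (half_le_self hR.le) hχq)).2 hq) χ.nonneg
      · simp [Function.notMem_support.1 hχq]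
    calc f q - Φ q = χ q * (f q - φ q) + (1 - χ q) * (f q - (M q - (f z - φ z))) := by
          simp only [Φ]; ring
      _ ≤ f z - φ z := by linarith

theorem exists_contDiff_isLocalMaxOn_sub [FiniteDimensional ℝ E] (n : ℕ∞) {D N : Set E}
    (hD : IsClosed D) {f : E → ℝ} (hf : UpperSemicontinuousOn f D) {z : E} (hz : z ∈ D) {y : ℝ}
    (hy : y < f z) (hN : N ∈ 𝓝[D] z) :
    ∃ q ∈ N, y < f q ∧ ∃ φ, ContDiff ℝ n φ ∧ IsLocalMaxOn (fun p => f p - φ p) D q := by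
  by_contra! hno
  obtain ⟨ρ, hρ, hball⟩ := (nhdsWithin_hasBasis Metric.nhds_basis_closedBall _).mem_iff.1 hN
  have hK : IsCompact (Metric.closedBall z ρ ∩ D) := (isCompact_closedBall z ρ).inter_right hD
  let P : E → ℝ := fun q => ‖toEuclidean (q - z)‖ ^ 2
  have hP : ContDiff ℝ n P := (toEuclidean.contDiff.comp (contDiff_id.sub contDiff_const)).norm_sq ℝ
  have hPz (q) (hq : P q = 0) : q = z := by simpa [P, sub_eq_zero] using hq
  have hle := nonpos_of_forall_isMaxOn_sub_mul (P := P) (f := fun q => f q + -y) hK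
    (hK.diff (Metric.isOpen_ball (x := z) (ε := ρ))) sdiff_subset
    ((hf.mono inter_subset_right).add upperSemicontinuousOn_const)
    hP.continuous.continuousOn.lowerSemicontinuousOn (fun q _ => by positivity)
    (fun q hq hPq => (hq.2 (by simpa [hPz q hPq] using hρ)).elim)
    (fun N _ q hq hmax => not_lt.1 fun hyq => ?_) z
    ⟨Metric.mem_closedBall_self hρ.le, hz⟩ (by simp [P])
  · linarith
  · refine hno q (hball hq.1) (by linarith) (fun p => N * P p) (contDiff_const.mul hP) ?_
    have hqb : q ∈ Metric.ball z ρ := not_not.1 fun h => hq.2 ⟨hq.1, h⟩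
    filter_upwards [self_mem_nhdsWithin, nhdsWithin_le_nhds (Metric.isOpen_ball.mem_nhds hqb)]
      with p hpD hpb
    have : f p + -y - N * P p ≤ f q + -y - N * P q :=
      hmax ⟨Metric.ball_subset_closedBall hpb, hpD⟩
    linarith

end TestFunctions

section ViscosityInequalities

/-- `𝓛[f] ≤ l` at `z` in the viscosity sense, tested by functions touching `f` from above locally
within `D`. That `w` satisfies `𝓛[w] ≥ l` is expressed as `𝓛[-w] ≤ -l`. -/
def ViscGenLE (r μ σ : ℝ) (D : Set (ℝ × ℝ × ℝ)) (f : ℝ × ℝ × ℝ → ℝ) (z : ℝ × ℝ × ℝ)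
    (l : ℝ) : Prop :=
  ∀ φ m, HasGenAt r μ σ φ z m → IsLocalMaxOn (fun q => f q - φ q) D z → m ≤ l

variable {r μ σ a b l m : ℝ} {D K Kb : Set (ℝ × ℝ × ℝ)} {f P φ M : ℝ × ℝ × ℝ → ℝ} {z : ℝ × ℝ × ℝ}
  {C : ℝ → ℝ} {u v : ℝ → ℝ × ℝ → ℝ}

theorem ViscGenLE.mono (hf : ViscGenLE r μ σ D f z l) (hlm : l ≤ m) : ViscGenLE r μ σ D f z m :=
  fun φ k hφ hmax => (hf φ k hφ hmax).trans hlm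

theorem ViscGenLE.add (hf : ViscGenLE r μ σ D f z l) (hφ : HasGenAt r μ σ φ z m) :
    ViscGenLE r μ σ D (fun q => f q + φ q) z (l + m) := by
  intro ψ k hψ hmax
  have := hf (fun q => ψ q - φ q) (k - m) (hψ.sub hφ) (by
    simpa only [sub_sub_eq_add_sub] using hmax)
  linarith

theorem ViscGenLE.mono_set {D' : Set (ℝ × ℝ × ℝ)} (hf : ViscGenLE r μ σ D f z l) (hD : D ⊆ D') :
    ViscGenLE r μ σ D' f z l :=
  fun φ m hφ hmax => hf φ m hφ (hmax.filter_mono (nhdsWithin_mono z hD))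

/-- Nonnegative classical supersolutions of `𝓛[P] = 0` on `K`, used as penalty functions and
barriers. -/
def IsNonnegSupersolOn (r μ σ : ℝ) (K : Set (ℝ × ℝ × ℝ)) (P : ℝ × ℝ × ℝ → ℝ) : Prop :=
  ∀ z ∈ K, 0 ≤ P z ∧ ∃ l, 0 ≤ l ∧ HasGenAt r μ σ P z l

theorem IsNonnegSupersolOn.add {Q : ℝ × ℝ × ℝ → ℝ} (hP : IsNonnegSupersolOn r μ σ K P)
    (hQ : IsNonnegSupersolOn r μ σ K Q) : IsNonnegSupersolOn r μ σ K fun z => P z + Q z := by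
  intro z hz
  obtain ⟨hP0, l, hl, hPl⟩ := hP z hz
  obtain ⟨hQ0, m, hm, hQm⟩ := hQ z hz
  exact ⟨add_nonneg hP0 hQ0, _, add_nonneg hl hm, hPl.add hQm⟩

theorem nonpos_of_viscGenLE_neg (hK : IsCompact K) (hKb : IsCompact Kb) (hKbK : Kb ⊆ K)
    (hKD : ∀ z ∈ K \ Kb, K ∈ 𝓝[D] z) (hf : UpperSemicontinuousOn f K)
    (hP : IsNonnegSupersolOn r μ σ K P)
    (hneg : ∀ z ∈ Kb, P z = 0 → f z < 0)
    (hsub : ∀ z ∈ K, 0 < f z → ∃ l < 0, ViscGenLE r μ σ D f z l) :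
    ∀ z ∈ K, P z = 0 → f z ≤ 0 := by
  have hPcont : ContinuousOn P K := fun z hz =>
    let ⟨_, _, _, h⟩ := hP z hz
    h.1.continuousAt.continuousWithinAt
  refine nonpos_of_forall_isMaxOn_sub_mul hK hKb hKbK hf hPcont.lowerSemicontinuousOn
    (fun z hz => (hP z hz).1) hneg fun N hN z hz hmax => not_lt.1 fun hfz => ?_
  obtain ⟨l, hl, hfl⟩ := hsub z hz.1 hfz
  obtain ⟨-, k, hk, hPk⟩ := hP z hz.1
  have := hfl _ _ (hPk.const_mul N) (mem_of_superset (hKD z hz) hmax)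
  linarith [mul_nonneg hN hk]

theorem IsViscSubsol.of_isLocalMaxOn (hu : IsViscSubsol C r μ σ a b u) (hM : ContDiff ℝ 2 M)
    (huM : ∀ q ∈ domI a b, u q.1 q.2 ≤ M q) (hz : z ∈ domI a b) (hφ : HasGenAt r μ σ φ z m)
    (hmax : IsLocalMaxOn (fun q => u q.1 q.2 - φ q) (domI a b) z) :
    m ≤ 0 ∧ (u z.1 z.2 : EReal) ≤ uscEnv (MopF C u) (Icc a b ×ˢ Sbar) z := by
  obtain ⟨Φ, hΦ, heq, hΦmax⟩ := exists_contDiff_isMaxOn_sub (n := 2) hφ.1 hM huM hmax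
  rw [← (hφ.congr_of_eventuallyEq heq).2]
  exact hu z.1 z.2 ⟨hz.1, hz.2.1⟩ hz.2.2 (fun t x y => Φ (t, x, y))
    ⟨univ, isOpen_univ, subset_univ _, hΦ.contDiffOn⟩
    fun t ht x hx => @hΦmax (t, x) ⟨ht.1, ht.2, hx⟩

theorem IsViscSupersol.of_isLocalMaxOn (hv : IsViscSupersol C r μ σ a b v) (hM : ContDiff ℝ 2 M)
    (hvM : ∀ q ∈ domI a b, -v q.1 q.2 ≤ M q) (hz : z ∈ domI a b) (hφ : HasGenAt r μ σ φ z m)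
    (hmax : IsLocalMaxOn (fun q => -v q.1 q.2 - φ q) (domI a b) z) :
    m ≤ 0 ∨ lscEnv (MopF C v) (Icc a b ×ˢ Sbar) z ≤ (v z.1 z.2 : EReal) := by
  obtain ⟨Φ, hΦ, heq, hΦmax⟩ := exists_contDiff_isMaxOn_sub (n := 2) hφ.1 hM hvM hmax
  rw [← neg_nonneg, ← (hφ.congr_of_eventuallyEq heq).neg.2]
  refine hv z.1 z.2 ⟨hz.1, hz.2.1⟩ hz.2.2 (fun t x y => -Φ (t, x, y))
    ⟨univ, isOpen_univ, subset_univ _, hΦ.neg.contDiffOn⟩ fun t ht x hx => ?_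
  have : -v t x - Φ (t, x) ≤ -v z.1 z.2 - Φ z := @hΦmax (t, x) ⟨ht.1, ht.2, hx⟩
  simp only [Prod.mk.eta]
  linarith

theorem IsViscSubsol.viscGenLE (hu : IsViscSubsol C r μ σ a b u) (hM : ContDiff ℝ 2 M)
    (huM : ∀ q ∈ domI a b, u q.1 q.2 ≤ M q) (hz : z ∈ domI a b) :
    ViscGenLE r μ σ (domI a b) (fun q => u q.1 q.2) z 0 :=
  fun _ _ hφ hmax => (hu.of_isLocalMaxOn hM huM hz hφ hmax).1

theorem IsViscSupersol.viscGenLE_neg (hv : IsViscSupersol C r μ σ a b v) (hM : ContDiff ℝ 2 M)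
    (hvM : ∀ q ∈ domI a b, -v q.1 q.2 ≤ M q) (hz : z ∈ domI a b)
    (himp : (v z.1 z.2 : EReal) < lscEnv (MopF C v) (Icc a b ×ˢ Sbar) z) :
    ViscGenLE r μ σ (domI a b) (fun q => -v q.1 q.2) z 0 :=
  fun _ _ hφ hmax => (hv.of_isLocalMaxOn hM hvM hz hφ hmax).resolve_right himp.not_ge

theorem isClosed_Sbar : IsClosed Sbar := isClosed_Ici.prod isClosed_Ici

theorem domI_subset : domI a b ⊆ Icc a b ×ˢ Sbar :=
  fun _ hz => ⟨⟨hz.1, hz.2.1.le⟩, hz.2.2.1⟩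

theorem domI_mem_nhdsWithin (hz : z ∈ domI a b) : domI a b ∈ 𝓝[Icc a b ×ˢ Sbar] z := by
  have hlt : ∀ᶠ q : ℝ × ℝ × ℝ in 𝓝 z, q.1 < b := continuousAt_fst.eventually_lt_const hz.2.1
  have hne : ∀ᶠ q : ℝ × ℝ × ℝ in 𝓝 z, q.2 ≠ (0, 0) := continuousAt_snd.eventually_ne hz.2.2.2
  filter_upwards [self_mem_nhdsWithin, nhdsWithin_le_nhds hlt, nhdsWithin_le_nhds hne]
    with q hq hqb hq0
  exact ⟨hq.1.1, hqb, hq.2, hq0⟩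

theorem IsViscSubsol.le_uscEnv (hu : IsViscSubsol C r μ σ a b u) (hM : ContDiff ℝ 2 M)
    (huM : ∀ q ∈ domI a b, u q.1 q.2 ≤ M q)
    (hu_usc : UpperSemicontinuousOn (fun p : ℝ × ℝ × ℝ => u p.1 p.2) (Icc a b ×ˢ Sbar))
    (hz : z ∈ domI a b) :
    (u z.1 z.2 : EReal) ≤ uscEnv (MopF C u) (Icc a b ×ˢ Sbar) z := by
  by_contra! hlt
  obtain ⟨y, hy, hyu⟩ := EReal.lt_iff_exists_real_btwn.1 hlt
  have hMop : ∀ᶠ q in 𝓝[Icc a b ×ˢ Sbar] z, ∀ᶠ p in 𝓝[Icc a b ×ˢ Sbar] q, MopF C u p < y :=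
    eventually_eventually_nhdsWithin.2 (eventually_lt_of_limsup_lt hy)
  obtain ⟨q, ⟨hq, hMq⟩, hyq, φ, hφ, hmax⟩ := exists_contDiff_isLocalMaxOn_sub 2
    (isClosed_Icc.prod isClosed_Sbar) hu_usc (domI_subset hz) (EReal.coe_lt_coe_iff.1 hyu)
    (inter_mem (domI_mem_nhdsWithin hz) hMop)
  have huq := (hu.of_isLocalMaxOn hM huM hq (.of_contDiffAt hφ.contDiffAt)
    (hmax.filter_mono (nhdsWithin_mono q domI_subset))).2
  have hMq' : uscEnv (MopF C u) (Icc a b ×ˢ Sbar) q ≤ y :=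
    have hlt : ∀ᶠ p in 𝓝[Icc a b ×ˢ Sbar] q, MopF C u p < y := hMq
    limsup_le_of_le (by isBoundedDefault) (hlt.mono fun _ => le_of_lt)
  exact hyq.not_ge (EReal.coe_le_coe_iff.1 (huq.trans hMq'))

end ViscosityInequalities

section Intervention

variable {C : ℝ → ℝ} {I : Set ℝ} {x : ℝ × ℝ} {d : ℝ} {z : ℝ × ℝ × ℝ} {u v : ℝ → ℝ × ℝ → ℝ}

theorem Dset_subset_Icc (hC0 : ∀ d, 0 < C d) (x : ℝ × ℝ) : Dset C x ⊆ Icc (-x.2) x.1 := by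
  rintro d ⟨h₁ : 0 ≤ x.1 - d - C d, h₂ : 0 ≤ x.2 + d⟩
  constructor <;> linarith [hC0 d]

theorem continuous_Gam (hC : Continuous C) (x : ℝ × ℝ) : Continuous (Gam C x) := by
  unfold Gam
  fun_prop

theorem continuous_prodMk_Gam (hC : Continuous C) :
    Continuous fun p : (ℝ × ℝ × ℝ) × ℝ => (p.1.1, Gam C p.1.2 p.2) := by
  unfold Gam
  fun_prop

theorem isCompact_Dset (hC : Continuous C) (hC0 : ∀ d, 0 < C d) (x : ℝ × ℝ) :
    IsCompact (Dset C x) :=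
  isCompact_Icc.of_isClosed_subset
    (isClosed_Sbar.preimage (continuous_Gam hC x)) (Dset_subset_Icc hC0 x)

theorem exists_le_of_MopF_le (hC : Continuous C) (hC0 : ∀ d, 0 < C d)
    (hv : LowerSemicontinuousOn (fun p : ℝ × ℝ × ℝ => v p.1 p.2) (I ×ˢ Sbar)) (hz : z.1 ∈ I) {y : ℝ}
    (h : MopF C v z ≤ y) : ∃ d ∈ Dset C z.2, v z.1 (Gam C z.2 d) ≤ y := by
  have hne : (Dset C z.2).Nonempty := by
    by_contra! hempty
    simp [MopF, hempty] at h
  have hlsc : LowerSemicontinuousOn (fun d => v z.1 (Gam C z.2 d)) (Dset C z.2) :=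
    hv.comp (g := fun d => (z.1, Gam C z.2 d))
      (continuous_const.prodMk (continuous_Gam hC z.2)).continuousOn
      fun d hd => ⟨hz, hd⟩
  obtain ⟨d, hd, hmin⟩ := hlsc.exists_isMinOn hne (isCompact_Dset hC hC0 z.2)
  refine ⟨d, hd, EReal.coe_le_coe_iff.1 (le_trans ?_ h)⟩
  exact le_iInf₂ fun d' hd' => EReal.coe_le_coe_iff.2 (hmin hd')

theorem MopF_le_lscEnv (hC : Continuous C) (hC0 : ∀ d, 0 < C d)
    (hv : LowerSemicontinuousOn (fun p : ℝ × ℝ × ℝ => v p.1 p.2) (I ×ˢ Sbar)) (hz : z.1 ∈ I) :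
    MopF C v z ≤ lscEnv (MopF C v) (I ×ˢ Sbar) z := by
  refine le_of_forall_lt fun y hy => ?_
  obtain ⟨y', hyy', hy'⟩ := EReal.lt_iff_exists_real_btwn.1 hy
  refine hyy'.trans_le (le_liminf_of_le (by isBoundedDefault) ?_)
  have hloc : ∀ d ∈ Icc (-(z.2.2 + 1)) (z.2.1 + 1), ∀ᶠ p : (ℝ × ℝ × ℝ) × ℝ in 𝓝 (z, d),
      p.1.1 ∈ I → p.2 ∈ Dset C p.1.2 → y' < v p.1.1 (Gam C p.1.2 p.2) := by
    intro d _
    have hΓ := continuous_prodMk_Gam hC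
    by_cases hd : d ∈ Dset C z.2
    · have hlt : y' < v z.1 (Gam C z.2 d) :=
        EReal.coe_lt_coe_iff.1 (hy'.trans_le (iInf₂_le d hd))
      have hnear := eventually_nhdsWithin_iff.1 (hv (z.1, Gam C z.2 d) ⟨hz, hd⟩ y' hlt)
      filter_upwards [hΓ.continuousAt.eventually hnear] with p hp hpI hpd using hp ⟨hpI, hpd⟩
    · filter_upwards [(hΓ.snd.continuousAt (x := (z, d))).eventually
        (isClosed_Sbar.isOpen_compl.mem_nhds hd)] with p hp _ hpd using (hp hpd).elim
  have hnear : ∀ᶠ q : ℝ × ℝ × ℝ in 𝓝 z, q.2.2 < z.2.2 + 1 ∧ q.2.1 < z.2.1 + 1 :=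
    (continuousAt_snd.snd.eventually_lt_const (lt_add_one _)).and
      (continuousAt_snd.fst.eventually_lt_const (lt_add_one _))
  filter_upwards [self_mem_nhdsWithin, nhdsWithin_le_nhds hnear, nhdsWithin_le_nhds
    (isCompact_Icc.eventually_forall_of_forall_eventually (P := fun q d =>
      q.1 ∈ I → d ∈ Dset C q.2 → y' < v q.1 (Gam C q.2 d)) hloc)] with q hqE hqz hq
  refine le_iInf₂ fun d hd => EReal.coe_le_coe_iff.2 (hq d ?_ hqE.1 hd).le
  exact Icc_subset_Icc (by linarith) (by linarith) (Dset_subset_Icc hC0 _ hd)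

theorem exists_le_of_lscEnv_MopF_le (hC : Continuous C) (hC0 : ∀ d, 0 < C d)
    (hv : LowerSemicontinuousOn (fun p : ℝ × ℝ × ℝ => v p.1 p.2) (I ×ˢ Sbar)) (hz : z.1 ∈ I) {y : ℝ}
    (h : lscEnv (MopF C v) (I ×ˢ Sbar) z ≤ y) : ∃ d ∈ Dset C z.2, v z.1 (Gam C z.2 d) ≤ y :=
  exists_le_of_MopF_le hC hC0 hv hz ((MopF_le_lscEnv hC hC0 hv hz).trans h)

theorem eventually_nonempty_Dset_inter (hC : Continuous C) (hmono : StrictMono fun d => d + C d)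
    (hd : d ∈ Dset C x) (hne : Gam C x d ≠ (0, 0)) {O : Set ℝ} (hO : O ∈ 𝓝 d) :
    ∀ᶠ x' in 𝓝 x, (Dset C x' ∩ O).Nonempty := by
  obtain ⟨hd₁ : 0 ≤ x.1 - d - C d, hd₂ : 0 ≤ x.2 + d⟩ := hd
  rcases hd₁.eq_or_lt with h₁ | h₁
  · have h₂ : 0 < x.2 + d := hd₂.lt_of_ne fun h₂ => hne (Prod.ext h₁.symm h₂.symm)
    have hpos : ∀ᶠ d' in 𝓝 d, 0 < x.2 + d' :=
      (by fun_prop : ContinuousAt (fun d' => x.2 + d') d).eventually_const_lt h₂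
    obtain ⟨d', ⟨hd'O, hd'₂⟩, hd' : d' < d⟩ := Filter.nonempty_of_mem
      (inter_mem (nhdsWithin_le_nhds (inter_mem hO hpos)) self_mem_nhdsWithin : _ ∈ 𝓝[<] d)
    have hd'₁ : 0 < x.1 - d' - C d' := by linarith [show d' + C d' < d + C d from hmono hd']
    filter_upwards [
      (by fun_prop : ContinuousAt (fun x' : ℝ × ℝ => x'.1 - d' - C d') x).eventually_const_lt hd'₁,
      (by fun_prop : ContinuousAt (fun x' : ℝ × ℝ => x'.2 + d') x).eventually_const_lt hd'₂]
      with x' hx₁ hx₂ using ⟨d', ⟨hx₁.le, hx₂.le⟩, hd'O⟩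
  · have hδ : Continuous fun x' : ℝ × ℝ => max d (-x'.2) := by fun_prop
    have hδx : max d (-x.2) = d := max_eq_left (by linarith)
    have hpos : ∀ᶠ x' in 𝓝 x, 0 < x'.1 - max d (-x'.2) - C (max d (-x'.2)) :=
      (by fun_prop : ContinuousAt (fun x' : ℝ × ℝ =>
        x'.1 - max d (-x'.2) - C (max d (-x'.2))) x).eventually_const_lt (by simpa only [hδx])
    filter_upwards [hpos, hδ.continuousAt.eventually (hδx.symm ▸ hO)] with x' hx' hx'O
    exact ⟨_, ⟨hx'.le, (neg_le_iff_add_nonneg' (a := x'.2)).1 (le_max_right _ _)⟩, hx'O⟩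

theorem uscEnv_MopF_le (hC : Continuous C) (hmono : StrictMono fun d => d + C d)
    (hu : UpperSemicontinuousOn (fun p : ℝ × ℝ × ℝ => u p.1 p.2) (I ×ˢ Sbar)) (hz : z.1 ∈ I)
    (hd : d ∈ Dset C z.2) (hne : Gam C z.2 d ≠ (0, 0)) :
    uscEnv (MopF C u) (I ×ˢ Sbar) z ≤ u z.1 (Gam C z.2 d) := by
  refine le_of_forall_gt_imp_ge_of_dense fun y hy => ?_
  obtain ⟨y', hy', hyy'⟩ := EReal.lt_iff_exists_real_btwn.1 hy
  refine (limsup_le_of_le (by isBoundedDefault) ?_).trans hyy'.le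
  have hlt := ((continuous_prodMk_Gam hC).continuousAt (x := (z, d))).eventually
    (eventually_nhdsWithin_iff.1
      (hu (z.1, Gam C z.2 d) ⟨hz, hd⟩ y' (EReal.coe_lt_coe_iff.1 hy')))
  rw [nhds_prod_eq, eventually_prod_iff] at hlt
  obtain ⟨p, hp, O, hO, hpO⟩ := hlt
  have hne := continuousAt_snd.eventually (eventually_nonempty_Dset_inter hC hmono hd hne hO)
  filter_upwards [self_mem_nhdsWithin, nhdsWithin_le_nhds hp, nhdsWithin_le_nhds hne]
    with q hqE hqp hqne
  obtain ⟨d', hd', hd'O⟩ := hqne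
  exact (iInf₂_le d' hd').trans (EReal.coe_le_coe_iff.2 (hpO hqp hd'O ⟨hqE.1, hd'⟩).le)

end Intervention

section Touching

/-- The points of `[a, T] × 𝒮̄` within sup-distance `ρ` of `z₀`. -/
def cylinder (a T : ℝ) (z₀ : ℝ × ℝ × ℝ) (ρ : ℝ) : Set (ℝ × ℝ × ℝ) :=
  Metric.closedBall z₀ ρ ∩ Icc a T ×ˢ Sbar

/-- Near `z₀` a subsolution `u` of `𝓛[V] = 0` touches `w` from below, and `𝓛[w] ≥ ε`
wherever `w < w z₀ + 3δ`. -/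
structure IsTouching (r μ σ a b : ℝ) (u w : ℝ × ℝ × ℝ → ℝ) (z₀ : ℝ × ℝ × ℝ) (ε δ ρ : ℝ) :
    Prop where
  delta_pos : 0 < δ
  radius_pos : 0 < ρ
  abs_mul_radius_le : |ε| * (2 * ρ) ≤ δ
  add_radius_lt : z₀.1 + ρ < b
  mem : z₀ ∈ Icc a b ×ˢ Sbar
  usc : UpperSemicontinuousOn u (cylinder a b z₀ ρ)
  lsc : LowerSemicontinuousOn w (cylinder a b z₀ ρ)
  le : ∀ z ∈ cylinder a b z₀ ρ, u z ≤ w z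
  eq : u z₀ = w z₀
  le_add : ∀ z ∈ cylinder a b z₀ ρ, u z ≤ w z₀ + δ
  sub_one_le : ∀ z ∈ cylinder a b z₀ ρ, w z₀ - 1 ≤ w z
  viscGenLE : ∀ z ∈ cylinder a b z₀ ρ, ViscGenLE r μ σ (Icc a b ×ˢ Sbar) u z 0
  viscGenLE_neg : ∀ z ∈ cylinder a b z₀ ρ, w z < w z₀ + 3 * δ →
    ViscGenLE r μ σ (Icc a b ×ˢ Sbar) (fun q => -w q) z (-ε)

/-- A solution `g` of `𝓛[g] = 0` on the part of the cylinder before time `T`, inserted between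
`u` and `w` up to `η` on the zero set of the penalty `P` in the time slice `T`, together with a
barrier `B` controlling the lateral boundary there. -/
structure IsSliceBarrier (r μ σ a : ℝ) (u w : ℝ × ℝ × ℝ → ℝ) (z₀ : ℝ × ℝ × ℝ) (δ ρ T η : ℝ)
    (g B P : ℝ × ℝ × ℝ → ℝ) : Prop where
  hasGenAt : ∀ z ∈ cylinder a T z₀ ρ, HasGenAt r μ σ g z 0
  mem_Icc : ∀ z ∈ cylinder a T z₀ ρ, g z ∈ Icc (w z₀ - 1 - η) (w z₀ + δ + η)
  barrier : IsNonnegSupersolOn r μ σ (cylinder a T z₀ ρ) B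
  penalty : IsNonnegSupersolOn r μ σ (cylinder a T z₀ ρ) P
  penalty_eq_zero : P z₀ = 0
  top : ∀ z ∈ cylinder a T z₀ ρ, z.1 = T → P z = 0 → g z ∈ Icc (u z - η) (w z + η)
  lateral : ∀ z ∈ cylinder a T z₀ ρ, dist z z₀ = ρ → P z = 0 → 1 ≤ B z

variable {r μ σ a b ε δ ρ T η κ : ℝ} {z z₀ : ℝ × ℝ × ℝ} {u w f g B P : ℝ × ℝ × ℝ → ℝ}

theorem cylinder_mono {T' : ℝ} (h : T ≤ T') : cylinder a T z₀ ρ ⊆ cylinder a T' z₀ ρ :=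
  inter_subset_inter_right _ (prod_mono_left (Icc_subset_Icc_right h))

theorem isCompact_cylinder : IsCompact (cylinder a T z₀ ρ) :=
  (isCompact_closedBall z₀ ρ).inter_right (isClosed_Icc.prod isClosed_Sbar)

theorem mem_cylinder_iff : z ∈ cylinder a T z₀ ρ ↔
    (|z.1 - z₀.1| ≤ ρ ∧ |z.2.1 - z₀.2.1| ≤ ρ ∧ |z.2.2 - z₀.2.2| ≤ ρ) ∧
      (z.1 ∈ Icc a T ∧ 0 ≤ z.2.1 ∧ 0 ≤ z.2.2) := by
  simp only [cylinder, Sbar, mem_inter_iff, Metric.mem_closedBall, Prod.dist_eq, Real.dist_eq,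
    sup_le_iff, mem_prod, mem_Ici]

theorem nonpos_on_cylinder (hf : UpperSemicontinuousOn f (cylinder a T z₀ ρ))
    (hP : IsNonnegSupersolOn r μ σ (cylinder a T z₀ ρ) P)
    (htop : ∀ z ∈ cylinder a T z₀ ρ, z.1 = T → P z = 0 → f z < 0)
    (hlat : ∀ z ∈ cylinder a T z₀ ρ, dist z z₀ = ρ → P z = 0 → f z < 0)
    (hsub : ∀ z ∈ cylinder a T z₀ ρ, 0 < f z →
      ∃ l < 0, ViscGenLE r μ σ (Icc a b ×ˢ Sbar) f z l) :
    ∀ z ∈ cylinder a T z₀ ρ, P z = 0 → f z ≤ 0 := by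
  have hopen : IsOpen {z : ℝ × ℝ × ℝ | dist z z₀ < ρ ∧ z.1 < T} :=
    (isOpen_lt (continuous_id.dist continuous_const) continuous_const).inter
      (isOpen_lt continuous_fst continuous_const)
  refine nonpos_of_viscGenLE_neg isCompact_cylinder (isCompact_cylinder.diff hopen)
    sdiff_subset ?_ hf hP ?_ hsub
  · rintro z ⟨hz, hzb⟩
    rw [Set.mem_sdiff, not_and_not_right] at hzb
    filter_upwards [self_mem_nhdsWithin, nhdsWithin_le_nhds (hopen.mem_nhds (hzb hz))] with q hq hqb
    exact ⟨hqb.1.le, ⟨hq.1.1, hqb.2.le⟩, hq.2⟩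
  · rintro z ⟨hz, hzb⟩ hPz
    rcases not_and_or.1 hzb with h | h
    · exact hlat z hz (le_antisymm hz.1 (not_lt.1 h)) hPz
    · exact htop z hz (le_antisymm hz.2.1.2 (not_lt.1 h)) hPz

theorem hasGenAt_const_mul_sub_time (c : ℝ) : HasGenAt r μ σ (fun p => c * (T - p.1)) z c := by
  simpa using HasGenAt.of_time (f := fun t => c * (T - t)) (by fun_prop)
    (((hasDerivAt_id' z.1).const_sub T).const_mul c)

theorem IsTouching.mem_cylinder (h : IsTouching r μ σ a b u w z₀ ε δ ρ) (hT : z₀.1 ≤ T) :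
    z₀ ∈ cylinder a T z₀ ρ :=
  ⟨Metric.mem_closedBall_self h.radius_pos.le, ⟨h.mem.1.1, hT⟩, h.mem.2⟩

theorem IsTouching.le_of_isSliceBarrier (h : IsTouching r μ σ a b u w z₀ ε δ ρ)
    (hb : IsSliceBarrier r μ σ a u w z₀ δ ρ T η g B P) (hT : z₀.1 ≤ T) (hTb : T ≤ b) (hη : 0 < η)
    (hκ : 0 < κ) : u z₀ ≤ g z₀ + (2 * δ + 1) * B z₀ + κ * (T - z₀.1) + 2 * η := by
  have hδ := h.delta_pos
  let φ : ℝ × ℝ × ℝ → ℝ := fun z => g z + (2 * δ + 1) * B z + κ * (T - z.1) + 2 * η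
  have hφ (z) (hz : z ∈ cylinder a T z₀ ρ) : ∃ l, 0 < l ∧ HasGenAt r μ σ φ z l := by
    obtain ⟨-, l, hl, hBl⟩ := hb.barrier z hz
    exact ⟨_, by positivity, (((hb.hasGenAt z hz).add (hBl.const_mul _)).add
      (hasGenAt_const_mul_sub_time _)).add (hasGenAt_const _)⟩
  have hφcont : ContinuousOn φ (cylinder a T z₀ ρ) := fun z hz =>
    let ⟨_, _, hl⟩ := hφ z hz
    hl.1.continuousAt.continuousWithinAt
  have hB0 (z) (hz : z ∈ cylinder a T z₀ ρ) := (hb.barrier z hz).1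
  have hcyl := cylinder_mono (a := a) (z₀ := z₀) (ρ := ρ) hTb
  suffices u z₀ + -φ z₀ ≤ 0 by simp only [φ] at this; linarith
  refine nonpos_on_cylinder (b := b) (f := fun z => u z + -φ z)
    ((h.usc.mono hcyl).add hφcont.neg.upperSemicontinuousOn) hb.penalty (fun z hz hzT hPz => ?_)
    (fun z hz hzρ hPz => ?_) (fun z hz _ => ?_)
    z₀ (h.mem_cylinder hT) hb.penalty_eq_zero
  · have := (hb.top z hz hzT hPz).1
    have := mul_nonneg (by positivity : 0 ≤ 2 * δ + 1) (hB0 z hz)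
    simp only [φ, hzT]
    linarith
  · have := h.le_add z (hcyl hz)
    have := (hb.mem_Icc z hz).1
    have := mul_le_mul_of_nonneg_left (hb.lateral z hz hzρ hPz) (by positivity : 0 ≤ 2 * δ + 1)
    have := mul_nonneg hκ.le (sub_nonneg.2 hz.2.1.2)
    simp only [φ]
    linarith
  · obtain ⟨l, hl, hφl⟩ := hφ z hz
    exact ⟨_, by linarith, (h.viscGenLE z (hcyl hz)).add hφl.neg⟩

theorem IsTouching.ge_of_isSliceBarrier (h : IsTouching r μ σ a b u w z₀ ε δ ρ)
    (hb : IsSliceBarrier r μ σ a u w z₀ δ ρ T η g B P) (hT : z₀.1 ≤ T) (hTρ : T ≤ z₀.1 + ρ)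
    (hη : 0 < η) (hκ : κ < ε) :
    g z₀ + κ * (T - z₀.1) - (2 * δ + 1) * B z₀ - 2 * η ≤ w z₀ := by
  have hδ := h.delta_pos
  have hTb : T ≤ b := hTρ.trans h.add_radius_lt.le
  let φ : ℝ × ℝ × ℝ → ℝ :=
    fun z => g z + κ * (T - z.1) + -(2 * δ + 1) * B z + -(2 * η)
  have hφ (z) (hz : z ∈ cylinder a T z₀ ρ) : ∃ l, l < ε ∧ HasGenAt r μ σ φ z l := by
    obtain ⟨-, l, hl, hBl⟩ := hb.barrier z hz
    have := mul_nonneg (by positivity : 0 ≤ 2 * δ + 1) hl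
    exact ⟨_, by linarith, (((hb.hasGenAt z hz).add (hasGenAt_const_mul_sub_time _)).add
      (hBl.const_mul _)).add (hasGenAt_const _)⟩
  have hφcont : ContinuousOn φ (cylinder a T z₀ ρ) := fun z hz =>
    let ⟨_, _, hl⟩ := hφ z hz
    hl.1.continuousAt.continuousWithinAt
  have hBA (z) (hz : z ∈ cylinder a T z₀ ρ) :=
    mul_nonneg (by positivity : 0 ≤ 2 * δ + 1) (hb.barrier z hz).1
  have htime (z) (hz : z ∈ cylinder a T z₀ ρ) : κ * (T - z.1) ≤ δ := by
    have hρz := (abs_le.1 (mem_cylinder_iff.1 hz).1.1).1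
    calc κ * (T - z.1) ≤ |ε| * (T - z.1) :=
          mul_le_mul_of_nonneg_right (hκ.le.trans (le_abs_self ε)) (sub_nonneg.2 hz.2.1.2)
      _ ≤ |ε| * (2 * ρ) := mul_le_mul_of_nonneg_left (by linarith) (abs_nonneg ε)
      _ ≤ δ := h.abs_mul_radius_le
  have hcyl := cylinder_mono (a := a) (z₀ := z₀) (ρ := ρ) hTb
  suffices -w z₀ + φ z₀ ≤ 0 by simp only [φ] at this; linarith
  have hneg : UpperSemicontinuousOn (fun z => -w z) (cylinder a T z₀ ρ) :=
    continuous_neg.comp_lowerSemicontinuousOn_antitone (h.lsc.mono hcyl) fun _ _ => neg_le_neg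
  refine nonpos_on_cylinder (b := b) (hneg.add hφcont.upperSemicontinuousOn)
    hb.penalty (fun z hz hzT hPz => ?_) (fun z hz hzρ hPz => ?_) (fun z hz hpos => ?_)
    z₀ (h.mem_cylinder hT) hb.penalty_eq_zero
  · simp only [φ, hzT]
    linarith [(hb.top z hz hzT hPz).2, hBA z hz]
  · have := mul_le_mul_of_nonneg_left (hb.lateral z hz hzρ hPz) (by positivity : 0 ≤ 2 * δ + 1)
    simp only [φ]
    linarith [h.sub_one_le z (hcyl hz), (hb.mem_Icc z hz).2, htime z hz]
  · obtain ⟨l, hl, hφl⟩ := hφ z hz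
    simp only [φ] at hpos
    have hw : w z < w z₀ + 3 * δ := by linarith [(hb.mem_Icc z hz).2, htime z hz, hBA z hz]
    exact ⟨_, by linarith, (h.viscGenLE_neg z (hcyl hz) hw).add hφl⟩

theorem IsTouching.mul_sub_le_of_isSliceBarrier (h : IsTouching r μ σ a b u w z₀ ε δ ρ)
    (hb : IsSliceBarrier r μ σ a u w z₀ δ ρ T η g B P) (hT : z₀.1 ≤ T) (hTρ : T ≤ z₀.1 + ρ)
    (hη : 0 < η) (hκ : 0 < κ) :
    (ε - 2 * κ) * (T - z₀.1) ≤ 4 * η + 2 * (2 * δ + 1) * B z₀ := by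
  linarith [h.eq, h.le_of_isSliceBarrier hb hT (hTρ.trans h.add_radius_lt.le) hη hκ,
    h.ge_of_isSliceBarrier hb hT hTρ hη (sub_lt_self ε hκ)]

theorem eq_mul_exp_of_discounted_eq {t t₀ x x₀ : ℝ}
    (h : x * Real.exp (-(r * t)) = x₀ * Real.exp (-(r * t₀))) :
    x = x₀ * Real.exp (r * (t - t₀)) := by
  rw [← mul_left_inj' (Real.exp_ne_zero (-(r * t))), h, mul_assoc, ← Real.exp_add]
  ring_nf

theorem isNonnegSupersolOn_sq_div {K : Set (ℝ × ℝ × ℝ)} (hK : ∀ z ∈ K, z.1 ≤ T) {s : ℝ}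
    (hs : 0 < s) : IsNonnegSupersolOn r μ σ K fun z => ((T - z.1) / s) ^ 2 := by
  intro z hz
  have hzT := sub_nonneg.2 (hK z hz)
  refine ⟨sq_nonneg _, _, ?_, .of_time (f := fun t => ((T - t) / s) ^ 2) (by fun_prop)
    ((((hasDerivAt_id' z.1).const_sub T).div_const s).fun_pow 2)⟩
  have : 0 ≤ 2 * ((T - z.1) / s) * (1 / s) := by positivity
  norm_num [neg_div]
  positivity

theorem abs_sub_eq_of_dist_eq (h : dist z z₀ = ρ) (h₁ : |z.1 - z₀.1| < ρ)
    (h₂ : |z.2.1 - z₀.2.1| < ρ) : |z.2.2 - z₀.2.2| = ρ := by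
  simp only [Prod.dist_eq, Real.dist_eq] at h
  rcases max_choice |z.1 - z₀.1| (max |z.2.1 - z₀.2.1| |z.2.2 - z₀.2.2|) with h' | h'
  · exact absurd (h'.symm.trans h) h₁.ne
  rcases max_choice |z.2.1 - z₀.2.1| |z.2.2 - z₀.2.2| with h'' | h''
  · exact absurd (h''.symm.trans (h'.symm.trans h)) h₂.ne
  · exact h''.symm.trans (h'.symm.trans h)

/- The squared discounted cash penalty confines the comparison to the characteristic
`x = x₀ e^{r (t - t₀)}`, so that the top and lateral conditions are needed only there; the part of
the boundary at times before `t₀ - s` is controlled by `((T - t) / s) ^ 2`. -/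
theorem isSliceBarrier_of_characteristic {s : ℝ} (hs : 0 < s) (hsρ : s ≤ ρ)
    (hsx : ∀ q, |q| < s → |z₀.2.1 * Real.exp (r * q) - z₀.2.1| < ρ)
    (hT : z₀.1 ≤ T) (hTs : T < z₀.1 + s)
    (hg : ∀ z ∈ cylinder a T z₀ ρ,
      HasGenAt r μ σ g z 0 ∧ g z ∈ Icc (w z₀ - 1 - η) (w z₀ + δ + η))
    (hB : IsNonnegSupersolOn r μ σ (cylinder a T z₀ ρ) B)
    (hP : IsNonnegSupersolOn r μ σ (cylinder a T z₀ ρ) P) (hPz₀ : P z₀ = 0)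
    (htop : ∀ z ∈ cylinder a T z₀ ρ, z.1 = T → z.2.1 = z₀.2.1 * Real.exp (r * (T - z₀.1)) →
      P z = 0 → g z ∈ Icc (u z - η) (w z + η))
    (hlat : ∀ z ∈ cylinder a T z₀ ρ, |z.1 - z₀.1| < s → |z.2.2 - z₀.2.2| = ρ → P z = 0 →
      1 ≤ B z) :
    IsSliceBarrier r μ σ a u w z₀ δ ρ T η g (fun z => ((T - z.1) / s) ^ 2 + B z)
      (fun z => (z.2.1 * Real.exp (-(r * z.1)) - z₀.2.1 * Real.exp (-(r * z₀.1))) ^ 2 + P z) := by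
  have hzero (z) (hz : z ∈ cylinder a T z₀ ρ)
      (h : (z.2.1 * Real.exp (-(r * z.1)) - z₀.2.1 * Real.exp (-(r * z₀.1))) ^ 2 + P z = 0) :
      z.2.1 = z₀.2.1 * Real.exp (r * (z.1 - z₀.1)) ∧ P z = 0 := by
    obtain ⟨hx, hPz⟩ := (add_eq_zero_iff_of_nonneg (sq_nonneg _) (hP z hz).1).1 h
    exact ⟨eq_mul_exp_of_discounted_eq (sub_eq_zero.1 (sq_eq_zero_iff.1 hx)), hPz⟩
  have hcash : IsNonnegSupersolOn r μ σ (cylinder a T z₀ ρ) fun z =>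
      (z.2.1 * Real.exp (-(r * z.1)) - z₀.2.1 * Real.exp (-(r * z₀.1))) ^ 2 :=
    fun z _ => ⟨sq_nonneg _, 0, le_rfl, hasGenAt_comp_discounted_cash
      (g := fun x => (x - z₀.2.1 * Real.exp (-(r * z₀.1))) ^ 2) (by fun_prop)⟩
  refine ⟨fun z hz => (hg z hz).1, fun z hz => (hg z hz).2,
    (isNonnegSupersolOn_sq_div (fun z hz => hz.2.1.2) hs).add hB, hcash.add hP, by simp [hPz₀],
    fun z hz hzT hPz => ?_, fun z hz hzρ hPz => ?_⟩
  · obtain ⟨hx, hPz⟩ := hzero z hz hPz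
    exact htop z hz hzT (hzT ▸ hx) hPz
  · obtain ⟨hx, hPz⟩ := hzero z hz hPz
    by_cases hzs : |z.1 - z₀.1| < s
    · have := hlat z hz hzs
        (abs_sub_eq_of_dist_eq hzρ (hzs.trans_le hsρ) (by rw [hx]; exact hsx _ hzs)) hPz
      linarith [sq_nonneg ((T - z.1) / s)]
    · have hzT := hz.2.1.2
      have : s ≤ T - z.1 := by rcases le_abs'.1 (not_lt.1 hzs) with h | h <;> linarith
      have : 1 ≤ ((T - z.1) / s) ^ 2 := one_le_pow₀ ((one_le_div hs).2 this)
      linarith [(hB z hz).1]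

theorem eventually_forall_abs_mul_exp_sub_lt (r x : ℝ) (hρ : 0 < ρ) :
    ∀ᶠ s in 𝓝[>] (0 : ℝ), ∀ q, |q| < s → |x * Real.exp (r * q) - x| < ρ := by
  have hcont : ContinuousAt (fun q => x * Real.exp (r * q)) 0 := by fun_prop
  obtain ⟨e, he, hball⟩ := Metric.continuousAt_iff.1 hcont ρ hρ
  filter_upwards [Ioo_mem_nhdsGT he] with s hs q hq
  have := hball (x := q) (by simpa using hq.trans hs.2)
  simpa [Real.dist_eq] using this

theorem nonpos_of_forall_mul_le_mul_sq {x β s : ℝ} (hs : 0 < s)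
    (h : ∀ τ ∈ Ioo 0 s, x * τ ≤ β * τ ^ 2) : x ≤ 0 := by
  have hlim : Tendsto (fun τ => β * τ) (𝓝[>] 0) (𝓝 0) :=
    ((continuous_const_mul β).tendsto' 0 0 (mul_zero β)).mono_left nhdsWithin_le_nhds
  refine ge_of_tendsto hlim ?_
  filter_upwards [Ioo_mem_nhdsGT hs] with τ hτ
  exact le_of_mul_le_mul_right (by linarith [h τ hτ] : x * τ ≤ β * τ * τ) hτ.1

theorem IsTouching.nonpos_of_forall_isSliceBarrier (h : IsTouching r μ σ a b u w z₀ ε δ ρ)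
    {s β : ℝ} (hs : 0 < s) (hsρ : s ≤ ρ)
    (hbar : ∀ τ ∈ Ioo 0 s, ∀ η > 0, ∃ g B P,
      IsSliceBarrier r μ σ a u w z₀ δ ρ (z₀.1 + τ) η g B P ∧ B z₀ ≤ β * τ ^ 2) : ε ≤ 0 := by
  have hδ := h.delta_pos
  refine le_of_forall_pos_le_add fun κ hκ => ?_
  suffices ε - 2 * (κ / 2) ≤ 0 by linarith
  refine nonpos_of_forall_mul_le_mul_sq (β := 2 * (2 * δ + 1) * β) hs fun τ hτ =>
    le_of_forall_pos_le_add fun η hη => ?_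
  obtain ⟨g, B, P, hb, hB⟩ := hbar τ hτ (η / 4) (by positivity)
  have hle := h.mul_sub_le_of_isSliceBarrier hb (by linarith [hτ.1]) (by linarith [hτ.2])
    (by positivity) (half_pos hκ)
  have := mul_le_mul_of_nonneg_left hB (by positivity : 0 ≤ 2 * (2 * δ + 1))
  rw [add_sub_cancel_left] at hle
  linarith

theorem IsTouching.nonpos_of_stock_eq_zero (h : IsTouching r μ σ a b u w z₀ ε δ ρ)
    (hy : z₀.2.2 = 0) : ε ≤ 0 := by
  have hρ := h.radius_pos
  obtain ⟨s, hsx, hs0, hsρ⟩ :=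
    ((eventually_forall_abs_mul_exp_sub_lt r z₀.2.1 hρ).and (Ioo_mem_nhdsGT hρ)).exists
  refine h.nonpos_of_forall_isSliceBarrier (β := 1 / s ^ 2) hs0 hsρ.le fun τ hτ η hη => ?_
  let zT : ℝ × ℝ × ℝ := (z₀.1 + τ, z₀.2.1 * Real.exp (r * τ), 0)
  have hzT : zT ∈ cylinder a b z₀ ρ := by
    have hτs : |τ| < s := by rw [abs_of_pos hτ.1]; exact hτ.2
    have := h.mem.1.1
    have := h.add_radius_lt
    rw [mem_cylinder_iff]
    refine ⟨⟨?_, (hsx τ hτs).le, by simpa [zT, hy] using hρ.le⟩, ⟨?_, ?_⟩,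
      mul_nonneg h.mem.2.1 (Real.exp_nonneg _), le_rfl⟩
    · simpa [zT] using (hτs.trans hsρ).le
    all_goals simp only [zT]; linarith [hτ.1, hτ.2]
  have hstock : IsNonnegSupersolOn r μ σ (cylinder a (z₀.1 + τ) z₀ ρ) fun z =>
      z.2.2 ^ 2 * Real.exp (-((2 * μ + σ ^ 2) * z.1)) :=
    fun z _ => ⟨by positivity, 0, le_rfl, hasGenAt_discounted_stock_sq⟩
  have hstock0 (z : ℝ × ℝ × ℝ) (hz : z.2.2 ^ 2 * Real.exp (-((2 * μ + σ ^ 2) * z.1)) = 0) :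
      z.2.2 = 0 := by simpa [Real.exp_ne_zero] using hz
  have hδ := h.delta_pos
  have hmax : max (u zT) (w z₀ - 1) ≤ w z₀ + δ := max_le (h.le_add zT hzT) (by linarith)
  refine ⟨_, _, _, isSliceBarrier_of_characteristic (g := fun _ => max (u zT) (w z₀ - 1))
    (B := fun _ => 0) hs0 hsρ.le hsx (by linarith [hτ.1]) (by linarith [hτ.2])
    (fun z _ => ⟨hasGenAt_const _, by linarith [le_max_right (u zT) (w z₀ - 1)], by linarith⟩)
    (fun z _ => ⟨le_rfl, 0, le_rfl, hasGenAt_const _⟩) hstock (by simp [hy])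
    (fun z _ hzt hzx hz => ?_) (fun z _ _ hzρ hz => ?_), le_of_eq ?_⟩
  · obtain rfl : z = zT := Prod.ext hzt (Prod.ext (by simpa [zT] using hzx) (hstock0 z hz))
    have := max_le (h.le zT hzT) (h.sub_one_le zT hzT)
    exact ⟨by linarith [le_max_left (u zT) (w z₀ - 1)], by linarith⟩
  · rw [hstock0 z hz, hy, sub_zero, abs_zero] at hzρ
    exact absurd hzρ hρ.ne
  · rw [add_sub_cancel_left]
    ring

theorem div_two_mul_le_abs_log_sub_log {x y : ℝ} (hx : 0 < x) (hρx : |y - x| ≤ x / 2) :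
    |y - x| / (2 * x) ≤ |Real.log y - Real.log x| := by
  have hy : 0 < y := by linarith [(abs_le.1 hρx).1]
  rw [← Real.log_div hy.ne' hx.ne']
  rcases le_total x y with hxy | hxy
  · rw [abs_of_nonneg (sub_nonneg.2 hxy)] at hρx ⊢
    calc (y - x) / (2 * x) ≤ (y - x) / y :=
          div_le_div_of_nonneg_left (sub_nonneg.2 hxy) hy (by linarith)
      _ = 1 - (y / x)⁻¹ := by field_simp
      _ ≤ Real.log (y / x) := Real.one_sub_inv_le_log_of_pos (div_pos hy hx)
      _ ≤ |Real.log (y / x)| := le_abs_self _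
  · rw [abs_of_nonpos (sub_nonpos.2 hxy)]
    calc -(y - x) / (2 * x) ≤ -(y - x) / x :=
          div_le_div_of_nonneg_left (by linarith) hx (by linarith)
      _ = -(y / x - 1) := by field_simp
      _ ≤ -Real.log (y / x) := neg_le_neg (Real.log_le_sub_one_of_pos (div_pos hy hx))
      _ ≤ |Real.log (y / x)| := neg_le_abs _

theorem log_sub_log_add_one_mem_Icc {x y : ℝ} (hx : 0 < x) (hy : |y - x| ≤ x / 2) :
    Real.log y - (Real.log x - 1) ∈ Icc 0 Real.pi := by
  have hy' := abs_le.1 hy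
  have hy0 : 0 < y := by linarith [hy'.1]
  have hle := Real.log_le_sub_one_of_pos (div_pos hy0 hx)
  have hge := Real.one_sub_inv_le_log_of_pos (div_pos hy0 hx)
  rw [Real.log_div hy0.ne' hx.ne'] at hle hge
  have : y / x ≤ 2 := (div_le_iff₀ hx).2 (by linarith)
  have : (y / x)⁻¹ ≤ 2 := by rw [inv_div]; exact (div_le_iff₀ hy0).2 (by linarith)
  constructor <;> linarith [Real.pi_gt_three]

theorem stock_pos_of_mem_cylinder (hy : 0 < z₀.2.2) (hρ : ρ ≤ z₀.2.2 / 2)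
    (hz : z ∈ cylinder a T z₀ ρ) : 0 < z.2.2 := by
  linarith [(abs_le.1 (mem_cylinder_iff.1 hz).1.2.2).1]

theorem IsTouching.exists_hasGenAt_between (h : IsTouching r μ σ a b u w z₀ ε δ ρ)
    (hy : 0 < z₀.2.2) (hρ : ρ ≤ z₀.2.2 / 2) (hTb : T ≤ b) (hη : 0 < η) (x : ℝ) :
    ∃ g, (∀ z ∈ cylinder a T z₀ ρ,
        HasGenAt r μ σ g z 0 ∧ g z ∈ Icc (w z₀ - 1 - η) (w z₀ + δ + η)) ∧
      ∀ z ∈ cylinder a T z₀ ρ, z.1 = T → z.2.1 = x → g z ∈ Icc (u z - η) (w z + η) := by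
  let L := Real.log z₀.2.2 - 1
  let ζ : ℝ → ℝ × ℝ × ℝ := fun θ => (T, x, Real.exp (θ + L))
  have hζ : Continuous ζ := by fun_prop
  let J := ζ ⁻¹' cylinder a T z₀ ρ
  have hJmaps : MapsTo ζ J (cylinder a b z₀ ρ) := fun θ hθ => cylinder_mono hTb hθ
  have hJπ : J ⊆ Icc 0 Real.pi := fun θ hθ => by
    have := log_sub_log_add_one_mem_Icc hy ((mem_cylinder_iff.1 hθ).1.2.2.trans hρ)
    simpa [ζ, L] using this
  have hδ := h.delta_pos
  obtain ⟨c, hcJ, hc⟩ := exists_cosHeat_between (m := w z₀ - 1) (M := w z₀ + δ)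
    (isCompact_cylinder.isClosed.preimage hζ) hJπ
    ((h.usc.comp hζ.continuousOn hJmaps).sup (upperSemicontinuousOn_const (z := w z₀ - 1)))
    (h.lsc.comp hζ.continuousOn hJmaps) (by linarith) hη
    (fun θ hθ => ⟨le_sup_right, sup_le (h.le_add _ (hJmaps hθ)) (by linarith)⟩)
    (fun θ hθ => sup_le (h.le _ (hJmaps hθ)) (h.sub_one_le _ (hJmaps hθ)))
  refine ⟨fun p => cosHeat c (σ ^ 2 * (T - p.1), logCoord μ σ T L p), fun z hz => ⟨?_, ?_⟩,
    fun z hz hzT hzx => ?_⟩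
  · exact (isCaloric_cosHeat c).hasGenAt_comp_logCoord r μ σ T L
      (stock_pos_of_mem_cylinder hy hρ hz).ne'
  · exact cosHeat_mem_Icc hc (mul_nonneg (sq_nonneg σ) (sub_nonneg.2 hz.2.1.2)) _
  · have hζz : ζ (Real.log z.2.2 - L) = z := by
      ext <;> simp [ζ, hzT, hzx, Real.exp_log (stock_pos_of_mem_cylinder hy hρ hz)]
    have hθ := hcJ (Real.log z.2.2 - L) (by simpa [J, hζz] using hz)
    simp only [Function.comp_apply, hζz] at hθ
    simp only [logCoord, hzT, sub_self, mul_zero, add_zero]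
    exact ⟨(sub_le_sub_right le_sup_left η).trans hθ.1, hθ.2⟩

theorem isNonnegSupersolOn_quarticHeat_logCoord {K : Set (ℝ × ℝ × ℝ)} {c L : ℝ} (hc : 0 ≤ c)
    (hK : ∀ z ∈ K, z.1 ≤ T ∧ 0 < z.2.2) :
    IsNonnegSupersolOn r μ σ K
      fun z => c * quarticHeat (σ ^ 2 * (T - z.1), logCoord μ σ T L z) := by
  intro z hz
  obtain ⟨hzT, hz0⟩ := hK z hz
  have hq : 0 ≤ quarticHeat (σ ^ 2 * (T - z.1), logCoord μ σ T L z) :=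
    le_trans (by positivity)
      (pow_four_le_quarticHeat (mul_nonneg (sq_nonneg σ) (sub_nonneg.2 hzT)) _)
  exact ⟨mul_nonneg hc hq, _, (mul_zero c).ge,
    (isCaloric_quarticHeat.hasGenAt_comp_logCoord r μ σ T L hz0.ne').const_mul c⟩

theorem one_le_quarticHeat_logCoord {d : ℝ} (hd : 0 < d) (hzT : z.1 ≤ T)
    (hlog : d ≤ |Real.log z.2.2 - Real.log z₀.2.2|)
    (hdrift : |(μ - σ ^ 2 / 2) * (T - z.1)| ≤ d / 2) :
    1 ≤ 16 / d ^ 4 *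
      quarticHeat (σ ^ 2 * (T - z.1), logCoord μ σ T (Real.log z₀.2.2) z) := by
  have hY : d / 2 ≤ |logCoord μ σ T (Real.log z₀.2.2) z| := by
    have := abs_sub_abs_le_abs_add (Real.log z.2.2 - Real.log z₀.2.2)
      ((μ - σ ^ 2 / 2) * (T - z.1))
    simp only [logCoord]
    linarith
  calc (1 : ℝ) = 16 / d ^ 4 * (d / 2) ^ 4 := by field_simp; norm_num
    _ ≤ 16 / d ^ 4 * |logCoord μ σ T (Real.log z₀.2.2) z| ^ 4 := by gcongr
    _ = 16 / d ^ 4 * logCoord μ σ T (Real.log z₀.2.2) z ^ 4 := by rw [Even.pow_abs (by decide)]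
    _ ≤ _ := by
      gcongr
      exact pow_four_le_quarticHeat (mul_nonneg (sq_nonneg σ) (sub_nonneg.2 hzT)) _

theorem IsTouching.nonpos_of_radius_le_half_stock (h : IsTouching r μ σ a b u w z₀ ε δ ρ)
    (hy : 0 < z₀.2.2) (hρy : ρ ≤ z₀.2.2 / 2) : ε ≤ 0 := by
  have hρ := h.radius_pos
  let ν := μ - σ ^ 2 / 2
  let d := ρ / (2 * z₀.2.2)
  have hd : 0 < d := by positivity
  have hsmall {c : ℝ} (hc : 0 < c) : ∀ᶠ s in 𝓝[>] (0 : ℝ), s ∈ Ioo 0 c := Ioo_mem_nhdsGT hc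
  obtain ⟨s, hsx, ⟨hs0, hsρ⟩, ⟨-, hs1⟩, -, hsd⟩ :=
    ((eventually_forall_abs_mul_exp_sub_lt r z₀.2.1 hρ).and ((hsmall hρ).and
      ((hsmall one_pos).and (hsmall (by positivity : 0 < d / (4 * (|ν| + 1))))))).exists
  refine h.nonpos_of_forall_isSliceBarrier
    (β := 1 / s ^ 2 + 16 / d ^ 4 * quarticHeat (σ ^ 2, ν)) hs0 hsρ.le fun τ hτ η hη => ?_
  obtain ⟨g, hg, hgtop⟩ := h.exists_hasGenAt_between hy hρy
    (by linarith [hτ.2, h.add_radius_lt] : z₀.1 + τ ≤ b) hη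
    (z₀.2.1 * Real.exp (r * (z₀.1 + τ - z₀.1)))
  refine ⟨g, _, _, isSliceBarrier_of_characteristic (P := fun _ => 0) hs0 hsρ.le hsx
    (by linarith [hτ.1]) (by linarith [hτ.2]) hg
    (isNonnegSupersolOn_quarticHeat_logCoord (c := 16 / d ^ 4) (L := Real.log z₀.2.2)
      (by positivity) fun z hz => ⟨hz.2.1.2, stock_pos_of_mem_cylinder hy hρy hz⟩)
    (fun z _ => ⟨le_rfl, 0, le_rfl, hasGenAt_const _⟩) rfl
    (fun z hz hzT hzx _ => hgtop z hz hzT hzx) (fun z hz hzs hzρ _ => ?_), ?_⟩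
  · refine one_le_quarticHeat_logCoord hd hz.2.1.2 ?_ ?_
    · have := div_two_mul_le_abs_log_sub_log hy (hzρ.trans_le hρy)
      rwa [hzρ] at this
    · rw [abs_mul, abs_of_nonneg (sub_nonneg.2 hz.2.1.2)]
      have hT : z₀.1 + τ - z.1 ≤ 2 * s := by linarith [(abs_lt.1 hzs).1, hτ.2]
      rw [lt_div_iff₀ (by positivity)] at hsd
      calc |ν| * (z₀.1 + τ - z.1) ≤ |ν| * (2 * s) := by gcongr
        _ ≤ d / 2 := by linarith
  · have hq := quarticHeat_mul_le (c := ν) (sq_nonneg σ) hτ.1.le (hτ.2.trans hs1).le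
    calc _ = 1 / s ^ 2 * τ ^ 2 + 16 / d ^ 4 * quarticHeat (σ ^ 2 * τ, ν * τ) := by
          simp only [logCoord, add_sub_cancel_left, sub_self, zero_add]
          ring
      _ ≤ 1 / s ^ 2 * τ ^ 2 + 16 / d ^ 4 * (quarticHeat (σ ^ 2, ν) * τ ^ 2) := by gcongr
      _ = _ := by ring

theorem eventually_cylinder_subset {N : Set (ℝ × ℝ × ℝ)} (hN : N ∈ 𝓝[Icc a b ×ˢ Sbar] z₀) :
    ∀ᶠ ρ in 𝓝[>] (0 : ℝ), cylinder a b z₀ ρ ⊆ N := by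
  obtain ⟨R, hR, hRN⟩ := (nhdsWithin_hasBasis Metric.nhds_basis_closedBall _).mem_iff.1 hN
  filter_upwards [Ioo_mem_nhdsGT hR] with ρ hρ
  exact (inter_subset_inter_left _ (Metric.closedBall_subset_closedBall hρ.2.le)).trans hRN

theorem nonpos_of_eventually_viscGenLE_neg (hδ : 0 < δ) (hz₀ : z₀ ∈ Icc a b ×ˢ Sbar)
    (hb : z₀.1 < b) (hu : UpperSemicontinuousOn u (Icc a b ×ˢ Sbar))
    (hw : LowerSemicontinuousOn w (Icc a b ×ˢ Sbar)) (hle : ∀ z ∈ Icc a b ×ˢ Sbar, u z ≤ w z)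
    (heq : u z₀ = w z₀)
    (hsub : ∀ᶠ z in 𝓝[Icc a b ×ˢ Sbar] z₀, ViscGenLE r μ σ (Icc a b ×ˢ Sbar) u z 0)
    (hsuper : ∀ᶠ z in 𝓝[Icc a b ×ˢ Sbar] z₀, w z < w z₀ + δ →
      ViscGenLE r μ σ (Icc a b ×ˢ Sbar) (fun q => -w q) z (-ε)) : ε ≤ 0 := by
  have hN := (hsub.and hsuper).and ((hu z₀ hz₀ (w z₀ + δ / 3) (by linarith)).and
    (hw z₀ hz₀ (w z₀ - 1) (by linarith)))
  have hsmall {c : ℝ} (hc : 0 < c) : ∀ᶠ ρ in 𝓝[>] (0 : ℝ), ρ ∈ Ioo 0 c := Ioo_mem_nhdsGT hc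
  have htouch : ∀ᶠ ρ in 𝓝[>] (0 : ℝ), IsTouching r μ σ a b u w z₀ ε (δ / 3) ρ := by
    filter_upwards [eventually_cylinder_subset hN, hsmall (sub_pos.2 hb),
      hsmall (by positivity : 0 < δ / 3 / (2 * (|ε| + 1)))] with ρ hρN ⟨hρ, hρb⟩ ⟨_, hρε⟩
    rw [lt_div_iff₀ (by positivity)] at hρε
    exact {
      delta_pos := by positivity
      radius_pos := hρ
      abs_mul_radius_le := by linarith
      add_radius_lt := by linarith
      mem := hz₀
      usc := hu.mono inter_subset_right
      lsc := hw.mono inter_subset_right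
      le := fun z hz => hle z hz.2
      eq := heq
      le_add := fun z hz => (hρN hz).2.1.le
      sub_one_le := fun z hz => (hρN hz).2.2.le
      viscGenLE := fun z hz => (hρN hz).1.1
      viscGenLE_neg := fun z hz hwz => (hρN hz).1.2 (by linarith) }
  rcases (mem_Ici.1 hz₀.2.2).eq_or_lt with hy | hy
  · obtain ⟨ρ, h⟩ := htouch.exists
    exact h.nonpos_of_stock_eq_zero hy.symm
  · obtain ⟨ρ, h, -, hρ⟩ := (htouch.and (hsmall (half_pos hy))).exists
    exact h.nonpos_of_radius_le_half_stock hy hρ.le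

end Touching

section Comparison

/-- A strict supersolution of `𝓛[V] = 0` of linear growth, increasing in both holdings, used to
localize the comparison at a maximum point. -/
noncomputable def growthFn (r μ b : ℝ) (z : ℝ × ℝ × ℝ) : ℝ :=
  Real.exp ((|r| + |μ| + 1) * (b - z.1)) * (1 + z.2.1 + z.2.2)

variable {C : ℝ → ℝ} {r μ σ a b ε W : ℝ} {u v : ℝ → ℝ × ℝ → ℝ} {z z₀ : ℝ × ℝ × ℝ}

theorem contDiff_growthFn : ContDiff ℝ 2 (growthFn r μ b) := by
  unfold growthFn
  fun_prop

theorem one_le_exp_growth_rate {t : ℝ} (ht : t ≤ b) :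
    1 ≤ Real.exp ((|r| + |μ| + 1) * (b - t)) :=
  Real.one_le_exp (mul_nonneg (by positivity) (sub_nonneg.2 ht))

theorem one_add_le_growthFn (hz : z ∈ Icc a b ×ˢ Sbar) :
    1 + z.2.1 + z.2.2 ≤ growthFn r μ b z :=
  le_mul_of_one_le_left (add_nonneg (add_nonneg zero_le_one hz.2.1) hz.2.2)
    (one_le_exp_growth_rate hz.1.2)

theorem growthFn_pos (hz : z ∈ Icc a b ×ˢ Sbar) : 0 < growthFn r μ b z :=
  (add_pos_of_pos_of_nonneg (add_pos_of_pos_of_nonneg one_pos hz.2.1) hz.2.2).trans_le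
    (one_add_le_growthFn hz)

theorem exists_one_le_hasGenAt_growthFn (hz : z ∈ Icc a b ×ˢ Sbar) :
    ∃ l, 1 ≤ l ∧ HasGenAt r μ σ (growthFn r μ b) z l := by
  let lam := |r| + |μ| + 1
  have hx : 0 ≤ z.2.1 := hz.2.1
  have hy : 0 ≤ z.2.2 := hz.2.2
  have ht := (((hasDerivAt_id' z.1).const_sub b).const_mul lam).exp.mul_const (1 + z.2.1 + z.2.2)
  have hdx := (((hasDerivAt_id' z.2.1).const_add 1).add_const z.2.2).const_mul
    (Real.exp (lam * (b - z.1)))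
  have hdy (y : ℝ) := ((hasDerivAt_id' y).const_add (1 + z.2.1)).const_mul
    (Real.exp (lam * (b - z.1)))
  refine ⟨Real.exp (lam * (b - z.1)) * (lam * (1 + z.2.1 + z.2.2) - r * z.2.1 - μ * z.2.2), ?_,
    .of_hasDerivAt contDiff_growthFn.contDiffAt ht hdx (Eventually.of_forall hdy)
      (hasDerivAt_const _ _) (by ring)⟩
  have hr : 0 ≤ (|r| - r) * z.2.1 := mul_nonneg (sub_nonneg.2 (le_abs_self r)) hx
  have hμ : 0 ≤ (|μ| - μ) * z.2.2 := mul_nonneg (sub_nonneg.2 (le_abs_self μ)) hy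
  have hrest : 0 ≤ |r| * (1 + z.2.2) + |μ| * (1 + z.2.1) + z.2.1 + z.2.2 := by positivity
  refine one_le_mul_of_one_le_of_one_le (one_le_exp_growth_rate hz.1.2) ?_
  simp only [lam]
  linarith

theorem exists_isMaxOn_sub_growthFn
    (hu : UpperSemicontinuousOn (fun p : ℝ × ℝ × ℝ => u p.1 p.2) (Icc a b ×ˢ Sbar))
    (hv : LowerSemicontinuousOn (fun p : ℝ × ℝ × ℝ => v p.1 p.2) (Icc a b ×ˢ Sbar))
    (huW : ∀ t ∈ Icc a b, ∀ x ∈ Sbar, u t x ≤ W)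
    (hv_growth : ∀ e > 0, ∃ k, ∀ t ∈ Icc a b, ∀ x ∈ Sbar, -(k + e * (x.1 + x.2)) ≤ v t x)
    (hε : 0 < ε) (hz : z ∈ Icc a b ×ˢ Sbar)
    (hpos : 0 < u z.1 z.2 + -v z.1 z.2 + -(ε * growthFn r μ b z)) :
    ∃ z₀ ∈ Icc a b ×ˢ Sbar,
      0 < u z₀.1 z₀.2 + -v z₀.1 z₀.2 + -(ε * growthFn r μ b z₀) ∧
      IsMaxOn (fun q => u q.1 q.2 + -v q.1 q.2 + -(ε * growthFn r μ b q))
        (Icc a b ×ˢ Sbar) z₀ := by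
  let F : ℝ × ℝ × ℝ → ℝ := fun q => u q.1 q.2 + -v q.1 q.2 + -(ε * growthFn r μ b q)
  obtain ⟨k, hk⟩ := hv_growth (ε / 2) (half_pos hε)
  let R := (W + k) / (ε / 2)
  let box : Set (ℝ × ℝ × ℝ) := Icc a b ×ˢ Icc 0 R ×ˢ Icc 0 R
  have hbox : box ⊆ Icc a b ×ˢ Sbar := fun q hq => ⟨hq.1, hq.2.1.1, hq.2.2.1⟩
  have hout (q) (hq : q ∈ Icc a b ×ˢ Sbar) (hqbox : q ∉ box) : F q ≤ 0 := by
    have hx : 0 ≤ q.2.1 := hq.2.1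
    have hy : 0 ≤ q.2.2 := hq.2.2
    have hR : R < q.2.1 + q.2.2 := by
      by_contra! h
      exact hqbox ⟨hq.1, ⟨hx, by linarith⟩, hy, by linarith⟩
    rw [div_lt_iff₀ (half_pos hε)] at hR
    have := mul_le_mul_of_nonneg_left (one_add_le_growthFn (r := r) (μ := μ) hq) hε.le
    simp only [F]
    linarith [huW _ hq.1 _ hq.2, hk _ hq.1 _ hq.2]
  have hF : UpperSemicontinuousOn F (Icc a b ×ˢ Sbar) :=
    (hu.add (continuous_neg.comp_lowerSemicontinuousOn_antitone hv fun _ _ => neg_le_neg)).add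
      (contDiff_growthFn.continuous.const_mul ε).neg.continuousOn.upperSemicontinuousOn
  have hzbox : z ∈ box := by_contra fun h => hpos.not_ge (hout z hz h)
  obtain ⟨z₀, hz₀, hmax⟩ := (hF.mono hbox).exists_isMaxOn ⟨z, hzbox⟩
    (isCompact_Icc.prod (isCompact_Icc.prod isCompact_Icc))
  have hpos₀ : 0 < F z₀ := hpos.trans_le (hmax hzbox)
  refine ⟨z₀, hbox hz₀, hpos₀, fun q hq => ?_⟩
  by_cases hqbox : q ∈ box
  exacts [hmax hqbox, (hout q hq hqbox).trans hpos₀.le]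

theorem growthFn_Gam_lt {d : ℝ} (hC0 : 0 < C d) :
    growthFn r μ b (z.1, Gam C z.2 d) < growthFn r μ b z :=
  mul_lt_mul_of_pos_left (by simp only [Gam]; linarith) (Real.exp_pos _)

/- If an impulse were optimal for `v` at the maximum point, then making the same impulse would not
decrease `u - v` and, the cost being positive, would strictly decrease `growthFn`. -/
theorem lt_lscEnv_MopF_of_isMaxOn (hC : Continuous C) (hC0 : ∀ d, 0 < C d)
    (hmono : StrictMono fun d => d + C d)
    (hu : UpperSemicontinuousOn (fun p : ℝ × ℝ × ℝ => u p.1 p.2) (Icc a b ×ˢ Sbar))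
    (hv : LowerSemicontinuousOn (fun p : ℝ × ℝ × ℝ => v p.1 p.2) (Icc a b ×ˢ Sbar))
    (hε : 0 < ε) (hz₀ : z₀ ∈ Icc a b ×ˢ Sbar)
    (hle : (u z₀.1 z₀.2 : EReal) ≤ uscEnv (MopF C u) (Icc a b ×ˢ Sbar) z₀)
    (horigin : v z₀.1 z₀.2 < v z₀.1 (0, 0))
    (hmax : IsMaxOn (fun q => u q.1 q.2 + -v q.1 q.2 + -(ε * growthFn r μ b q))
      (Icc a b ×ˢ Sbar) z₀) :
    (v z₀.1 z₀.2 : EReal) < lscEnv (MopF C v) (Icc a b ×ˢ Sbar) z₀ := by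
  by_contra! hlt
  obtain ⟨d, hd, hvd⟩ := exists_le_of_lscEnv_MopF_le hC hC0 hv hz₀.1 hlt
  have hne : Gam C z₀.2 d ≠ (0, 0) := fun h => (h ▸ hvd).not_gt horigin
  have hud : u z₀.1 z₀.2 ≤ u z₀.1 (Gam C z₀.2 d) :=
    EReal.coe_le_coe_iff.1 (hle.trans (uscEnv_MopF_le hC hmono hu hz₀.1 hd hne))
  have hψ : ε * growthFn r μ b (z₀.1, Gam C z₀.2 d) < ε * growthFn r μ b z₀ :=
    mul_lt_mul_of_pos_left (growthFn_Gam_lt (hC0 d)) hε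
  have hmaxΓ : u z₀.1 (Gam C z₀.2 d) + -v z₀.1 (Gam C z₀.2 d) +
      -(ε * growthFn r μ b (z₀.1, Gam C z₀.2 d)) ≤
        u z₀.1 z₀.2 + -v z₀.1 z₀.2 + -(ε * growthFn r μ b z₀) :=
    hmax (show (z₀.1, Gam C z₀.2 d) ∈ Icc a b ×ˢ Sbar from ⟨hz₀.1, hd⟩)
  linarith

theorem exists_eventually_lt_lscEnv {X : Type*} [TopologicalSpace X] {E : Set X} {h : X → EReal}
    {x : X} {y : ℝ} (hy : (y : EReal) < lscEnv h E x) :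
    ∃ δ > 0, ∀ᶠ q in 𝓝[E] x, ∀ y' : ℝ, y' < y + δ → (y' : EReal) < lscEnv h E q := by
  obtain ⟨m, hym, hm⟩ := EReal.lt_iff_exists_real_btwn.1 hy
  refine ⟨m - y, sub_pos.2 (EReal.coe_lt_coe_iff.1 hym), ?_⟩
  filter_upwards [eventually_eventually_nhdsWithin.2 (eventually_lt_of_lt_liminf hm)]
    with q hq y' hy'
  exact (EReal.coe_lt_coe_iff.2 (by linarith)).trans_le
    (le_liminf_of_le (h := hq.mono fun _ => le_of_lt))

theorem IsViscSupersol.viscGenLE_neg_add_growthFn {k e θ : ℝ} (hv : IsViscSupersol C r μ σ a b v)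
    (hv_growth : ∀ t ∈ Icc a b, ∀ x ∈ Sbar, -(k + e * (x.1 + x.2)) ≤ v t x) (hε : 0 < ε)
    (hz : z ∈ domI a b)
    (himp : (v z.1 z.2 : EReal) < lscEnv (MopF C v) (Icc a b ×ˢ Sbar) z) :
    ViscGenLE r μ σ (Icc a b ×ˢ Sbar)
      (fun q => -(v q.1 q.2 + (ε * growthFn r μ b q + θ))) z (-ε) := by
  have hvz := (hv.viscGenLE_neg (M := fun q => k + e * (q.2.1 + q.2.2)) (by fun_prop)
    (fun q hq => neg_le.1 (hv_growth _ (domI_subset hq).1 _ (domI_subset hq).2)) hz himp).mono_set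
    domI_subset
  obtain ⟨l, hl, hψ⟩ := exists_one_le_hasGenAt_growthFn (r := r) (μ := μ) (σ := σ) (domI_subset hz)
  simp only [neg_add _ (ε * _ + θ)]
  refine (hvz.add ((hψ.const_mul ε).add (hasGenAt_const θ)).neg).mono ?_
  linarith [mul_le_mul_of_nonneg_left hl hε.le]

theorem not_isMaxOn_sub_growthFn (hC : Continuous C) (hC0 : ∀ d, 0 < C d)
    (hmono : StrictMono fun d => d + C d)
    (hu_usc : UpperSemicontinuousOn (fun p : ℝ × ℝ × ℝ => u p.1 p.2) (Icc a b ×ˢ Sbar))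
    (hv_lsc : LowerSemicontinuousOn (fun p : ℝ × ℝ × ℝ => v p.1 p.2) (Icc a b ×ˢ Sbar))
    (hu : IsViscSubsol C r μ σ a b u) (hv : IsViscSupersol C r μ σ a b v)
    (huW : ∀ t ∈ Icc a b, ∀ x ∈ Sbar, u t x ≤ W) {k e : ℝ}
    (hv_growth : ∀ t ∈ Icc a b, ∀ x ∈ Sbar, -(k + e * (x.1 + x.2)) ≤ v t x) (hε : 0 < ε)
    (hz₀ : z₀ ∈ domI a b) (horigin : v z₀.1 z₀.2 < v z₀.1 (0, 0)) :
    ¬ IsMaxOn (fun q => u q.1 q.2 + -v q.1 q.2 + -(ε * growthFn r μ b q))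
      (Icc a b ×ˢ Sbar) z₀ := by
  intro hmax
  have hz₀E := domI_subset hz₀
  have huM (q) (hq : q ∈ domI a b) : u q.1 q.2 ≤ W :=
    huW _ (domI_subset hq).1 _ (domI_subset hq).2
  obtain ⟨δ, hδ, hδv⟩ := exists_eventually_lt_lscEnv
    (lt_lscEnv_MopF_of_isMaxOn hC hC0 hmono hu_usc hv_lsc hε hz₀E
      (hu.le_uscEnv contDiff_const huM hu_usc hz₀) horigin hmax)
  let θ := u z₀.1 z₀.2 - v z₀.1 z₀.2 - ε * growthFn r μ b z₀
  have hψ : Continuous fun q => ε * growthFn r μ b q := contDiff_growthFn.continuous.const_mul ε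
  refine hε.not_ge (nonpos_of_eventually_viscGenLE_neg (r := r) (μ := μ) (σ := σ)
    (w := fun q => v q.1 q.2 + (ε * growthFn r μ b q + θ)) (half_pos hδ) hz₀E hz₀.2.1 hu_usc
    (hv_lsc.add (hψ.add continuous_const).continuousOn.lowerSemicontinuousOn)
    (fun q hq => ?_) (by simp only [θ]; ring) ?_ ?_)
  · have : u q.1 q.2 + -v q.1 q.2 + -(ε * growthFn r μ b q) ≤ _ := hmax hq
    simp only [θ]
    linarith
  · filter_upwards [domI_mem_nhdsWithin hz₀] with q hq
    exact (hu.viscGenLE contDiff_const huM hq).mono_set domI_subset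
  · have hψδ : ∀ᶠ q in 𝓝 z₀, ε * growthFn r μ b z₀ - δ / 2 < ε * growthFn r μ b q :=
      hψ.continuousAt.eventually_const_lt (sub_lt_self _ (half_pos hδ))
    filter_upwards [domI_mem_nhdsWithin hz₀, hδv, nhdsWithin_le_nhds hψδ] with q hq himp hψq hwq
    exact hv.viscGenLE_neg_add_growthFn hv_growth hε hq (himp _ (by linarith))

theorem eunorm_le_add {x : ℝ × ℝ} (hx : x ∈ Sbar) : eunorm x ≤ x.1 + x.2 := by
  have h₁ : 0 ≤ x.1 := hx.1
  have h₂ : 0 ≤ x.2 := hx.2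
  rw [eunorm, Real.sqrt_le_left (by positivity)]
  linarith [mul_nonneg h₁ h₂, add_sq x.1 x.2]

theorem exists_mul_one_add_rpow_le {p c e : ℝ} (hp₀ : 0 ≤ p) (hp₁ : p < 1) (hc : 0 ≤ c)
    (he : 0 < e) : ∃ k, ∀ m, 0 ≤ m → c * (1 + m ^ p) ≤ k + e * m := by
  have hlim := (tendsto_rpow_neg_atTop (sub_pos.2 hp₁)).const_mul c
  rw [mul_zero] at hlim
  obtain ⟨R, hRe, hR⟩ := ((hlim.eventually_le_const he).and (eventually_gt_atTop 0)).exists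
  refine ⟨c * (1 + R ^ p), fun m hm => ?_⟩
  have hslope : R ^ p * (m / R) = R ^ (-(1 - p)) * m := by
    rw [neg_sub, Real.rpow_sub_one hR.ne']
    ring
  have hpow : m ^ p ≤ R ^ p + R ^ (-(1 - p)) * m :=
    calc m ^ p = R ^ p * (m / R) ^ p := by
          rw [← Real.mul_rpow hR.le (by positivity), mul_div_cancel₀ _ hR.ne']
      _ ≤ R ^ p * (1 + m / R) ^ p := by gcongr; linarith
      _ ≤ R ^ p * (1 + m / R) := by
          gcongr
          exact Real.rpow_le_self_of_one_le (le_add_of_nonneg_right (by positivity)) hp₁.le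
      _ = R ^ p + R ^ (-(1 - p)) * m := by rw [mul_add, mul_one, hslope]
  calc c * (1 + m ^ p) ≤ c * (1 + (R ^ p + R ^ (-(1 - p)) * m)) := by gcongr
    _ = c * (1 + R ^ p) + c * R ^ (-(1 - p)) * m := by ring
    _ ≤ c * (1 + R ^ p) + e * m := by gcongr

theorem exists_neg_add_mul_le_of_neg_rpow_le {p c e : ℝ} (hp₀ : 0 ≤ p) (hp₁ : p < 1) (hc : 0 ≤ c)
    (hv : ∀ t ∈ Icc a b, ∀ x ∈ Sbar, -(c * (1 + eunorm x ^ p)) ≤ v t x) (he : 0 < e) :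
    ∃ k, ∀ t ∈ Icc a b, ∀ x ∈ Sbar, -(k + e * (x.1 + x.2)) ≤ v t x := by
  obtain ⟨k, hk⟩ := exists_mul_one_add_rpow_le hp₀ hp₁ hc he
  refine ⟨k, fun t ht x hx => (neg_le_neg ?_).trans (hv t ht x hx)⟩
  linarith [hk (eunorm x) (Real.sqrt_nonneg _), mul_le_mul_of_nonneg_left (eunorm_le_add hx) he.le]

theorem IsCostFn.pos (hC : IsCostFn C) (d : ℝ) : 0 < C d :=
  hC.2.2.1.trans_le (hC.2.1 0 d (by simp))

theorem parabolic_comparison_general (hC : Continuous C) (hC0 : ∀ d, 0 < C d)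
    (hmono : StrictMono fun d => d + C d)
    (hu_usc : UpperSemicontinuousOn (fun p : ℝ × ℝ × ℝ => u p.1 p.2) (Icc a b ×ˢ Sbar))
    (hv_lsc : LowerSemicontinuousOn (fun p : ℝ × ℝ × ℝ => v p.1 p.2) (Icc a b ×ˢ Sbar))
    (hu : IsViscSubsol C r μ σ a b u) (hv : IsViscSupersol C r μ σ a b v)
    (huW : ∀ t ∈ Icc a b, ∀ x ∈ Sbar, u t x ≤ W)
    (hv_growth : ∀ e > 0, ∃ k, ∀ t ∈ Icc a b, ∀ x ∈ Sbar, -(k + e * (x.1 + x.2)) ≤ v t x)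
    (horigin : ∀ t ∈ Icc a b, W ≤ v t (0, 0)) (hb : ∀ x ∈ Sbar, u b x ≤ v b x) :
    ∀ t ∈ Icc a b, ∀ x ∈ Sbar, u t x ≤ v t x := by
  by_contra! ⟨t, ht, x, hx, hlt⟩
  obtain ⟨ε, hε, hεψ⟩ := exists_pos_mul_lt (sub_pos.2 hlt) (growthFn r μ b (t, x))
  obtain ⟨z₀, hz₀, hpos, hmax⟩ := exists_isMaxOn_sub_growthFn (r := r) (μ := μ) hu_usc hv_lsc huW
    hv_growth hε (z := (t, x)) ⟨ht, hx⟩ (by linarith)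
  have hlt₀ : v z₀.1 z₀.2 < u z₀.1 z₀.2 := by
    linarith [mul_pos hε (growthFn_pos (r := r) (μ := μ) hz₀)]
  have horigin₀ : v z₀.1 z₀.2 < v z₀.1 (0, 0) :=
    hlt₀.trans_le ((huW _ hz₀.1 _ hz₀.2).trans (horigin _ hz₀.1))
  have htb : z₀.1 ≠ b := fun h => (h ▸ hlt₀).not_ge (hb _ hz₀.2)
  have hne : z₀.2 ≠ (0, 0) := fun h => (h ▸ horigin₀).false
  obtain ⟨k, hk⟩ := hv_growth 1 one_pos
  exact not_isMaxOn_sub_growthFn hC hC0 hmono hu_usc hv_lsc hu hv huW hk hε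
    ⟨hz₀.1.1, lt_of_le_of_ne hz₀.1.2 htb, hz₀.2, hne⟩ horigin₀ hmax

end Comparison

/-- (Proposition: parabolic comparison principle on a goal interval.) -/
theorem parabolic_comparison
    (C : ℝ → ℝ) (hC : IsCostFn C)
    (r μ σ : ℝ) (hσ : 0 < σ)
    (K k : ℕ) (hK : 1 ≤ K) (hk1 : 1 ≤ k) (hkK : k ≤ K)
    (w G : ℕ → ℝ)
    (hw : ∀ i, k ≤ i → i ≤ K → 0 < w i) (hG : ∀ i, k ≤ i → i ≤ K → 0 < G i)
    (p₀ c : ℝ) (hp₀ : 0 < p₀) (hp₁ : p₀ < 1) (hc : 0 < c)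
    (a b : ℝ) (hab : a < b)
    (u v : ℝ → ℝ × ℝ → ℝ)
    (hu_usc : UpperSemicontinuousOn (fun p : ℝ × (ℝ × ℝ) => u p.1 p.2)
      (Set.Icc a b ×ˢ Sbar))
    (hv_lsc : LowerSemicontinuousOn (fun p : ℝ × (ℝ × ℝ) => v p.1 p.2)
      (Set.Icc a b ×ˢ Sbar))
    (hu_sub : IsViscSubsol C r μ σ a b u)
    (hv_super : IsViscSupersol C r μ σ a b v)
    (hu_bd : ∀ t ∈ Set.Icc a b, ∀ x ∈ Sbar,
      0 ≤ u t x ∧ u t x ≤ ∑ i ∈ Finset.Icc k K, w i * G i)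
    (hv_bd : ∀ t ∈ Set.Icc a b, ∀ x ∈ Sbar,
      -(c * (1 + eunorm x ^ p₀)) ≤ v t x ∧ v t x ≤ ∑ i ∈ Finset.Icc k K, w i * G i)
    (h0 : ∀ t ∈ Set.Icc a b,
      u t (0, 0) ≤ v t (0, 0) ∧ v t (0, 0) = ∑ i ∈ Finset.Icc k K, w i * G i)
    (hb : ∀ x ∈ Sbar, u b x ≤ v b x) :
    ∀ t ∈ Set.Icc a b, ∀ x ∈ Sbar, u t x ≤ v t x :=
  parabolic_comparison_general hC.1 hC.pos hC.2.2.2.1 hu_usc hv_lsc hu_sub hv_super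
    (fun t ht x hx => (hu_bd t ht x hx).2)
    (fun _ he => exists_neg_add_mul_le_of_neg_rpow_le hp₀.le hp₁ hc.le
      (fun t ht x hx => (hv_bd t ht x hx).1) he)
    (fun t ht => (h0 t ht).2.ge) hb
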